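/- arXiv:1909.09723 — 3 statements merged into one kernel-verified Lean document; each statement's English description precedes it below -/
import Mathlib

section
/- Let S be a semitopological semigroup, let (X,τ) be a Hausdorff locally convex space whose topology τ is determined by a family Q of seminorms, and let (S,(K,weak)) be a Q-nonexpansive dynamical system where K ⊆ X is a minimal weakly compact S-invariant set (weakly compact, s(K) ⊆ K for every s ∈ S, and containing no proper nonempty weakly compact S-invariant subset). If μ is an S-invariant Radon probability measure on K with its weak topology, then K equals the support of μ and K is totally bounded in the topology τ. -/
open Set MeasureTheory

noncomputable section

universe u v

/-- The weak topology on a topological module `X` over `𝕜`: the coarsest topology making all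
continuous linear functionals continuous. -/
def weakTop (𝕜 : Type*) (X : Type*) [NontriviallyNormedField 𝕜] [AddCommGroup X]
    [Module 𝕜 X] [TopologicalSpace X] : TopologicalSpace X :=
  ⨅ f : X →L[𝕜] 𝕜, TopologicalSpace.induced (⇑f) inferInstance

/-- A semitopological semigroup: multiplication is separately continuous. -/
def IsSemitopologicalSemigroup (S : Type*) [Semigroup S] [TopologicalSpace S] : Prop :=
  (∀ t : S, Continuous fun s => t * s) ∧ (∀ t : S, Continuous fun s => s * t)

/-!
The support of `μ` is a nonempty closed invariant subset of `K`, so it is `K` by minimality.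

Let `p` be one of the seminorms and `r > 0`. Weakly compact sets are fragmented by continuous
seminorms: some nonempty relatively weakly open piece of `K` has `p`-diameter at most `r`. That
piece has positive measure, hence some ball `B(x₀, r)` has measure `c > 0`. Nonexpansiveness and
invariance give `μ (B(x, r)) ≤ μ (B(sx, r))`, so the points of `K` whose `r`-ball has measure at
least `c` form a nonempty invariant set, which is weakly dense in `K` by minimality. As `μ` is
finite, finitely many balls of radius `2r` cover this set, and, being weakly closed, they cover `K`.

If fragmentation failed, repeatedly separating pairs of points at `p`-distance more than `ε` by
functionals would give a dyadic tree of weakly open sets meeting `K`. Its uncountably many branches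
would yield an `ε`-separated family in the weak closure of a countable set. By Mazur's theorem that
closure lies in the closed span of the set, which is separable.
-/

open scoped Topology

section CantorScheme

variable {Y β : Type*}

theorem exists_antitone_cantorScheme {P : Set Y → Prop} {R : Set Y → Set Y → Prop} {U₀ : Set Y}
    (hU₀ : P U₀) (hsplit : ∀ U, P U → ∃ V : β → Set Y,
      (∀ b, P (V b) ∧ V b ⊆ U) ∧ Pairwise fun a b => R (V a) (V b)) :
    ∃ A : List β → Set Y, CantorScheme.Antitone A ∧ (∀ l, P (A l)) ∧
      ∀ l, Pairwise fun a b => R (A (a :: l)) (A (b :: l)) := by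
  choose V hV hVR using fun U : Subtype P => hsplit U U.2
  let A : List β → Subtype P := List.foldr (fun b U => ⟨V U b, (hV U b).1⟩) ⟨U₀, hU₀⟩
  exact ⟨fun l => A l, fun l b => (hV (A l) b).2, fun l => (A l).2, fun l => hVR (A l)⟩

theorem pairwise_of_forall_mem_res {A : List β → Set Y} {R : Y → Y → Prop}
    (hA : ∀ l, Pairwise fun a b => ∀ x ∈ A (a :: l), ∀ y ∈ A (b :: l), R x y)
    {y : (ℕ → β) → Y} (hy : ∀ σ n, y σ ∈ A (PiNat.res σ n)) :
    Pairwise fun σ τ => R (y σ) (y τ) := by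
  intro σ τ hστ
  let n := PiNat.firstDiff σ τ
  have hres : PiNat.res σ n = PiNat.res τ n :=
    PiNat.res_eq_res.2 fun _ => PiNat.apply_eq_of_lt_firstDiff
  refine hA (PiNat.res σ n) (PiNat.apply_firstDiff_ne hστ) _ (hy σ (n + 1)) _ ?_
  rw [hres]
  exact hy τ (n + 1)

theorem exists_countable_forall_mem_closure_res [TopologicalSpace Y] [Countable β] {K : Set Y}
    (hK : IsCompact K) {A : List β → Set Y} (hA : CantorScheme.Antitone A)
    (hAK : ∀ l, (A l ∩ K).Nonempty) :
    ∃ D : Set Y, D.Countable ∧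
      ∀ σ : ℕ → β, ∃ y ∈ closure D, ∀ n, y ∈ closure (A (PiNat.res σ n)) := by
  choose x hx using hAK
  refine ⟨range x, countable_range x, fun σ => ?_⟩
  obtain ⟨y, -, hy⟩ : ∃ y ∈ K, MapClusterPt y Filter.atTop fun n => x (PiNat.res σ n) :=
    hK.exists_mapClusterPt (Filter.tendsto_principal.2 (.of_forall fun n => (hx _).2))
  have hanti : Antitone fun n => A (PiNat.res σ n) := antitone_nat_of_succ_le fun n => hA _ (σ n)
  have hmem := mapClusterPt_atTop_iff_forall_mem_closure.1 hy
  refine ⟨y, closure_mono ?_ (hmem 0), fun n => closure_mono ?_ (hmem n)⟩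
  · exact image_subset_iff.2 fun n _ => mem_range_self _
  · exact image_subset_iff.2 fun m hm => hanti hm (hx _).1

end CantorScheme

theorem uncountable_nat_to_bool : Uncountable (ℕ → Bool) := by
  rw [← Cardinal.aleph0_lt_mk_iff]
  simpa using Cardinal.aleph0_lt_continuum

theorem countable_of_pairwise_le_seminorm_sub {𝕜 E α : Type*} [SeminormedRing 𝕜] [AddCommGroup E]
    [SMul 𝕜 E] [TopologicalSpace E] [ContinuousSub E] {p : Seminorm 𝕜 E} (hp : Continuous p)
    {C : Set E} (hC : TopologicalSpace.IsSeparable C) {ε : ℝ} (hε : 0 < ε) {y : α → E}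
    (hyC : ∀ a, y a ∈ C) (hy : Pairwise fun a b => ε ≤ p (y a - y b)) : Countable α := by
  obtain ⟨D, hD, hCD⟩ := hC
  have happrox (a : α) : ∃ q ∈ D, p (y a - q) < ε / 2 := by
    have hopen : IsOpen {q | p (y a - q) < ε / 2} :=
      isOpen_lt (hp.comp (continuous_const.sub continuous_id)) continuous_const
    obtain ⟨q, hq, hqD⟩ := mem_closure_iff.1 (hCD (hyC a)) _ hopen (by simpa using half_pos hε)
    exact ⟨q, hqD, hq⟩
  choose q hqD hq using happrox
  have hinj : Function.Injective q := by
    intro a b hab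
    by_contra hne
    have hlt : p (y a - y b) < ε := calc
      p (y a - y b) = p ((y a - q a) - (y b - q b)) := by rw [hab, sub_sub_sub_cancel_right]
      _ ≤ p (y a - q a) + p (y b - q b) := map_sub_le_add p _ _
      _ < ε := by linarith [hq a, hq b]
    exact hlt.not_ge (hy hne)
  have := hD.to_subtype
  exact (hinj.codRestrict hqD).countable

section WeakTopology

variable {X : Type*} [AddCommGroup X] [Module ℝ X] [TopologicalSpace X]

theorem continuous_weakTop (f : X →L[ℝ] ℝ) : Continuous[weakTop ℝ X, _] f :=
  continuous_iff_le_induced.2 (iInf_le _ f)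

theorem continuous_weakTop_toWeakSpace [ContinuousAdd X] [ContinuousConstSMul ℝ X] :
    Continuous[weakTop ℝ X, _] (toWeakSpace ℝ X) :=
  continuous_induced_rng.2 (@continuous_pi _ _ _ (weakTop ℝ X) _ _ continuous_weakTop)

variable [IsTopologicalAddGroup X] [ContinuousSMul ℝ X] [LocallyConvexSpace ℝ X]

theorem t2Space_weakTop [T2Space X] : @T2Space X (weakTop ℝ X) :=
  @T2Space.of_injective_continuous _ _ (weakTop ℝ X) _ _ _ (toWeakSpace ℝ X).injective
    continuous_weakTop_toWeakSpace

theorem isClosed_weakTop_of_convex {s : Set X} (hs : Convex ℝ s) (hsc : IsClosed s) :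
    IsClosed[weakTop ℝ X] s := by
  have himage : IsClosed (toWeakSpace ℝ X '' s) := by
    rw [← closure_eq_iff_isClosed, ← hs.toWeakSpace_closure ℝ, hsc.closure_eq]
  rw [← (toWeakSpace ℝ X).injective.preimage_image s]
  exact @IsClosed.preimage _ _ (weakTop ℝ X) _ _ continuous_weakTop_toWeakSpace _ himage

theorem isClosed_weakTop_seminorm_closedBall {p : Seminorm ℝ X} (hp : Continuous p) (x : X)
    (r : ℝ) : IsClosed[weakTop ℝ X] (p.closedBall x r) :=
  isClosed_weakTop_of_convex (p.convex_closedBall x r)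
    (isClosed_le (hp.comp (continuous_id.sub continuous_const)) continuous_const)

theorem isSeparable_closure_weakTop {D : Set X} (hD : D.Countable) :
    TopologicalSpace.IsSeparable (closure[weakTop ℝ X] D) := by
  have hspan : TopologicalSpace.IsSeparable (closure (Submodule.span ℝ D : Set X)) :=
    hD.isSeparable.span.closure
  have hclosed : IsClosed[weakTop ℝ X] (closure (Submodule.span ℝ D : Set X)) :=
    isClosed_weakTop_of_convex (Submodule.convex _).closure isClosed_closure
  exact hspan.mono <| @closure_minimal _ (weakTop ℝ X) _ _
    (Submodule.subset_span.trans subset_closure) hclosed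

theorem exists_strongDual_eq_seminorm {p : Seminorm ℝ X} (hp : Continuous p) (v : X) :
    ∃ f : X →L[ℝ] ℝ, f v = p v ∧ ∀ z, f z ≤ p z := by
  have hwd (c : ℝ) (hc : c • v = 0) : c • p v = 0 := by
    simpa [hc] using (map_smul_eq_mul p c v).symm
  let g := LinearPMap.mkSpanSingleton' (σ := RingHom.id ℝ) v (p v) hwd
  have hg : ∀ z : g.domain, g z ≤ p z := by
    rintro ⟨z, hz⟩
    obtain ⟨c, rfl⟩ := Submodule.mem_span_singleton.1 hz
    calc g ⟨c • v, hz⟩ = c * p v := LinearPMap.mkSpanSingleton'_apply v (p v) hwd c hz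
      _ ≤ |c| * p v := by gcongr; exact le_abs_self c
      _ = p (c • v) := (map_smul_eq_mul p c v).symm
  obtain ⟨f, hf, hfp⟩ :=
    Module.Dual.exists_continuous_extension_of_le_seminorm_real g.domain g.toFun hp hg
  have hv := Submodule.mem_span_singleton_self (R := ℝ) v
  have hfv : f v = p v :=
    (hf ⟨v, hv⟩).trans (LinearPMap.mkSpanSingleton'_apply_self v (p v) hwd hv)
  exact ⟨f, hfv, fun z => (le_abs_self _).trans (hfp z)⟩

theorem exists_isOpen_weakTop_forall_closure_le_seminorm_sub {p : Seminorm ℝ X}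
    (hp : Continuous p) {x y : X} {ε : ℝ} (hxy : ε < p (x - y)) :
    ∃ U V : Set X, IsOpen[weakTop ℝ X] U ∧ IsOpen[weakTop ℝ X] V ∧ x ∈ U ∧ y ∈ V ∧
      ∀ a ∈ closure[weakTop ℝ X] U, ∀ b ∈ closure[weakTop ℝ X] V, ε ≤ p (a - b) := by
  obtain ⟨f, hfv, hfp⟩ := exists_strongDual_eq_seminorm hp (x - y)
  rw [map_sub] at hfv
  have hf := continuous_weakTop f
  obtain ⟨δ, hδ, hεδ⟩ : ∃ δ > 0, ε + 2 * δ = f x - f y :=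
    ⟨(f x - f y - ε) / 2, by linarith, by ring⟩
  let _ := weakTop ℝ X
  refine ⟨f ⁻¹' Ioi (f x - δ), f ⁻¹' Iio (f y + δ), isOpen_Ioi.preimage hf, isOpen_Iio.preimage hf,
    sub_lt_self _ hδ, lt_add_of_pos_right _ hδ, fun a ha b hb => ?_⟩
  have hfa : f x - δ ≤ f a :=
    closure_minimal (fun z hz => le_of_lt hz) (isClosed_Ici.preimage hf) ha
  have hfb : f b ≤ f y + δ :=
    closure_minimal (fun z hz => le_of_lt hz) (isClosed_Iic.preimage hf) hb
  calc ε ≤ f a - f b := by linarith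
    _ = f (a - b) := (map_sub f a b).symm
    _ ≤ p (a - b) := hfp _

theorem exists_isOpen_weakTop_subset_pairwise_le_seminorm_sub {p : Seminorm ℝ X}
    (hp : Continuous p) {K U : Set X} (hU : IsOpen[weakTop ℝ X] U) {x y : X} (hx : x ∈ U ∩ K)
    (hy : y ∈ U ∩ K) {ε : ℝ} (hxy : ε < p (x - y)) :
    ∃ V : Bool → Set X, (∀ b, (IsOpen[weakTop ℝ X] (V b) ∧ (V b ∩ K).Nonempty) ∧ V b ⊆ U) ∧
      Pairwise fun a b => ∀ x ∈ closure[weakTop ℝ X] (V a), ∀ y ∈ closure[weakTop ℝ X] (V b),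
        ε ≤ p (x - y) := by
  obtain ⟨V, W, hV, hW, hxV, hyW, hVW⟩ :=
    exists_isOpen_weakTop_forall_closure_le_seminorm_sub hp hxy
  let _ := weakTop ℝ X
  have hUV : closure (U ∩ V) ⊆ closure V := closure_mono inter_subset_right
  have hUW : closure (U ∩ W) ⊆ closure W := closure_mono inter_subset_right
  refine ⟨fun b => bif b then U ∩ V else U ∩ W, Bool.forall_bool.2 ⟨?_, ?_⟩, ?_⟩
  · exact ⟨⟨hU.inter hW, y, ⟨hy.1, hyW⟩, hy.2⟩, inter_subset_left⟩
  · exact ⟨⟨hU.inter hV, x, ⟨hx.1, hxV⟩, hx.2⟩, inter_subset_left⟩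
  · rintro (_ | _) (_ | _) hne a ha b hb
    · exact absurd rfl hne
    · exact (hVW b (hUV hb) a (hUW ha)).trans_eq (map_sub_rev p b a)
    · exact hVW a (hUV ha) b (hUW hb)
    · exact absurd rfl hne

theorem exists_cantorScheme_weakTop_pairwise_le_seminorm_sub {p : Seminorm ℝ X}
    (hp : Continuous p) {K : Set X} (hK : K.Nonempty) {ε : ℝ}
    (hlarge : ∀ U, IsOpen[weakTop ℝ X] U → (U ∩ K).Nonempty →
      ∃ x ∈ U ∩ K, ∃ y ∈ U ∩ K, ε < p (x - y)) :
    ∃ A : List Bool → Set X, CantorScheme.Antitone A ∧ (∀ l, (A l ∩ K).Nonempty) ∧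
      ∀ l, Pairwise fun a b => ∀ x ∈ closure[weakTop ℝ X] (A (a :: l)),
        ∀ y ∈ closure[weakTop ℝ X] (A (b :: l)), ε ≤ p (x - y) := by
  obtain ⟨A, hanti, hA, hsep⟩ := exists_antitone_cantorScheme (β := Bool) (U₀ := univ)
    (P := fun U => IsOpen[weakTop ℝ X] U ∧ (U ∩ K).Nonempty)
    (R := fun U V => ∀ x ∈ closure[weakTop ℝ X] U, ∀ y ∈ closure[weakTop ℝ X] V, ε ≤ p (x - y))
    ⟨@isOpen_univ X (weakTop ℝ X), by rwa [univ_inter]⟩ (by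
      rintro U ⟨hU, hUK⟩
      obtain ⟨x, hx, y, hy, hxy⟩ := hlarge U hU hUK
      exact exists_isOpen_weakTop_subset_pairwise_le_seminorm_sub hp hU hx hy hxy)
  exact ⟨A, hanti, fun l => (hA l).2, hsep⟩

theorem exists_isOpen_weakTop_inter_forall_seminorm_sub_le {p : Seminorm ℝ X} (hp : Continuous p)
    {K : Set X} (hK : K.Nonempty) (hKc : @IsCompact X (weakTop ℝ X) K) {ε : ℝ} (hε : 0 < ε) :
    ∃ U, IsOpen[weakTop ℝ X] U ∧ (U ∩ K).Nonempty ∧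
      ∀ x ∈ U ∩ K, ∀ y ∈ U ∩ K, p (x - y) ≤ ε := by
  by_contra! hlarge
  obtain ⟨A, hanti, hAK, hsep⟩ :=
    exists_cantorScheme_weakTop_pairwise_le_seminorm_sub hp hK hlarge
  obtain ⟨D, hD, hbranch⟩ :=
    @exists_countable_forall_mem_closure_res _ _ (weakTop ℝ X) _ _ hKc _ hanti hAK
  choose y hyD hyA using hbranch
  have hy : Pairwise fun σ τ => ε ≤ p (y σ - y τ) :=
    pairwise_of_forall_mem_res (A := fun l => closure[weakTop ℝ X] (A l)) hsep hyA
  have hcountable : Countable (ℕ → Bool) :=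
    countable_of_pairwise_le_seminorm_sub hp (isSeparable_closure_weakTop hD) hε hyD hy
  exact not_countable_iff.2 uncountable_nat_to_bool hcountable

end WeakTopology

section InvariantMeasure

variable {Y : Type*} [MeasurableSpace Y] {μ : Measure Y} {K : Set Y} {g : Y → Y}

theorem measure_preimage_of_forall_subset (hK : MeasurableSet K) (hKμ : ∀ᵐ x ∂μ, x ∈ K)
    (hmaps : MapsTo g K K) (hg : ∀ A ⊆ K, MeasurableSet A → μ {x ∈ K | g x ∈ A} = μ A)
    {A : Set Y} (hA : MeasurableSet A) : μ (g ⁻¹' A) = μ A := by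
  have hμ_inter (B : Set Y) : μ (K ∩ B) = μ B := measure_congr <| by
    filter_upwards [hKμ] with x hx using propext (and_iff_right hx)
  have hpreimage : K ∩ g ⁻¹' A = {x ∈ K | g x ∈ K ∩ A} := by
    ext x
    exact and_congr_right fun hx => (and_iff_right (hmaps hx)).symm
  rw [← hμ_inter, hpreimage, hg _ inter_subset_left (hK.inter hA), hμ_inter]

theorem mapsTo_support_of_measure_preimage [TopologicalSpace Y] [OpensMeasurableSpace Y]
    (hKμ : ∀ᵐ x ∂μ, x ∈ K) (hgc : ContinuousOn g K)
    (hg : ∀ A, MeasurableSet A → μ (g ⁻¹' A) = μ A) :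
    MapsTo g (μ.support ∩ K) μ.support := by
  rintro x ⟨hx, hxK⟩
  rw [Measure.support_eq_forall_isOpen] at hx ⊢
  intro U hxU hU
  obtain ⟨V, hV, hVU⟩ := continuousOn_iff'.1 hgc U hU
  have hxV : x ∈ V := (hVU.subset ⟨hxU, hxK⟩).1
  calc 0 < μ V := hx V hxV hV
    _ ≤ μ (g ⁻¹' U) := measure_mono_ae <| by
      filter_upwards [hKμ] with z hzK hzV using (hVU.superset ⟨hzV, hzK⟩).1
    _ = μ U := hg U hU.measurableSet

theorem measure_seminorm_closedBall_le {𝕜 : Type*} [SeminormedRing 𝕜] [AddCommGroup Y] [SMul 𝕜 Y]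
    {p : Seminorm 𝕜 Y} (hKμ : ∀ᵐ x ∂μ, x ∈ K) (hg : ∀ A, MeasurableSet A → μ (g ⁻¹' A) = μ A)
    (hgp : ∀ x ∈ K, ∀ y ∈ K, p (g x - g y) ≤ p (x - y)) {x : Y} (hx : x ∈ K) {r : ℝ}
    (hball : MeasurableSet (p.closedBall (g x) r)) :
    μ (p.closedBall x r) ≤ μ (p.closedBall (g x) r) := by
  rw [← hg _ hball]
  refine measure_mono_ae ?_
  filter_upwards [hKμ] with y hy hyx
  exact p.mem_closedBall.2 ((hgp y hy x hx).trans (p.mem_closedBall.1 hyx))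

theorem exists_finset_forall_not_disjoint_of_le_measure [IsFiniteMeasure μ] {ι : Type*}
    {B : ι → Set Y} (hB : ∀ i, MeasurableSet (B i)) {c : ENNReal} (hc : c ≠ 0) {A : Set ι}
    (hA : ∀ i ∈ A, c ≤ μ (B i)) : ∃ t : Finset ι, ∀ i ∈ A, ∃ j ∈ t, ¬Disjoint (B j) (B i) := by
  by_contra! hnot
  obtain ⟨u, huA, hu⟩ := exists_seq_of_forall_finset_exists (· ∈ A)
    (fun i j => Disjoint (B i) (B j)) fun t _ => hnot t
  have hdisj : Pairwise (Function.onFun Disjoint (B ∘ u)) := by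
    intro m n hmn
    rcases hmn.lt_or_gt with hlt | hgt
    · exact hu m n hlt
    · exact (hu n m hgt).symm
  have hfin := Measure.finite_const_le_meas_of_disjoint_iUnion μ (pos_iff_ne_zero.2 hc)
    (fun n => hB (u n)) hdisj (measure_ne_top _ _)
  exact infinite_univ (hfin.subset fun n _ => hA _ (huA n))

end InvariantMeasure

/-- `K` is a minimal nonempty compact set invariant under the maps `π s`, each of which is
continuous on `K`. The maps are total functions of which only the restrictions to `K` matter, and
they form an arbitrary family, since minimality only involves sets invariant under every `π s`. -/
structure IsMinimalCompactInvariant {S Y : Type*} [TopologicalSpace Y] (π : S → Y → Y)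
    (K : Set Y) : Prop where
  nonempty : K.Nonempty
  isCompact : IsCompact K
  mapsTo : ∀ s, MapsTo (π s) K K
  continuousOn : ∀ s, ContinuousOn (π s) K
  eq_of_subset : ∀ K' ⊆ K, K'.Nonempty → IsCompact K' → (∀ s, MapsTo (π s) K' K') → K' = K

namespace IsMinimalCompactInvariant

variable {S Y : Type*} [TopologicalSpace Y] {π : S → Y → Y} {K : Set Y}

theorem subset_closure_of_mapsTo (hK : IsMinimalCompactInvariant π K) {A : Set Y} (hAK : A ⊆ K)
    (hA : A.Nonempty) (hinv : ∀ s, MapsTo (π s) A A) : K ⊆ closure A := by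
  rw [← inter_eq_left]
  refine hK.eq_of_subset _ inter_subset_left (hA.mono (subset_inter hAK subset_closure))
    (hK.isCompact.inter_right isClosed_closure) fun s x hx => ⟨hK.mapsTo s hx.1, ?_⟩
  exact ((hK.continuousOn s x hx.1).mono hAK).mem_closure hx.2 (hinv s)

variable [MeasurableSpace Y] [OpensMeasurableSpace Y] {μ : Measure Y}

theorem support_eq (hK : IsMinimalCompactInvariant π K) (hKc : IsClosed K)
    (hKμ : ∀ᵐ x ∂μ, x ∈ K) (hμK : μ K ≠ 0)
    (hμ : ∀ s A, MeasurableSet A → μ (π s ⁻¹' A) = μ A) : μ.support = K := by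
  have hsub : μ.support ⊆ K := Measure.support_subset_of_isClosed hKc hKμ
  have hne : μ.support.Nonempty := by
    contrapose! hμK
    exact Measure.measure_eq_zero_of_isCompact_subset_compl_support hK.isCompact (by simp [hμK])
  have hinv (s : S) : MapsTo (π s) μ.support μ.support := by
    simpa only [inter_eq_left.2 hsub] using
      mapsTo_support_of_measure_preimage hKμ (hK.continuousOn s) (hμ s)
  exact hK.eq_of_subset _ hsub hne
    (hK.isCompact.of_isClosed_subset Measure.isClosed_support hsub) hinv

theorem exists_finset_subset_iUnion_closedBall {𝕜 : Type*} [SeminormedRing 𝕜] [AddCommGroup Y]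
    [SMul 𝕜 Y] {p : Seminorm 𝕜 Y} [IsFiniteMeasure μ] (hK : IsMinimalCompactInvariant π K)
    (hKμ : ∀ᵐ x ∂μ, x ∈ K) (hμ : ∀ s A, MeasurableSet A → μ (π s ⁻¹' A) = μ A)
    (hπ : ∀ s, ∀ x ∈ K, ∀ y ∈ K, p (π s x - π s y) ≤ p (x - y))
    (hp : ∀ x r, IsClosed (p.closedBall x r)) {x₀ : Y} (hx₀ : x₀ ∈ K) {r : ℝ}
    (hμx₀ : μ (p.closedBall x₀ r) ≠ 0) :
    ∃ F : Finset Y, K ⊆ ⋃ y ∈ F, p.closedBall y (2 * r) := by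
  let A := {x ∈ K | μ (p.closedBall x₀ r) ≤ μ (p.closedBall x r)}
  have hAinv (s : S) : MapsTo (π s) A A := fun x hx => ⟨hK.mapsTo s hx.1, hx.2.trans
    (measure_seminorm_closedBall_le hKμ (hμ s) (hπ s) hx.1 (hp _ _).measurableSet)⟩
  have hdense : K ⊆ closure A :=
    hK.subset_closure_of_mapsTo (sep_subset _ _) ⟨x₀, hx₀, le_rfl⟩ hAinv
  obtain ⟨F, hF⟩ := exists_finset_forall_not_disjoint_of_le_measure
    (fun x => (hp x r).measurableSet) hμx₀ fun x (hx : x ∈ A) => hx.2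
  have hcover : A ⊆ ⋃ y ∈ F, p.closedBall y (2 * r) := by
    intro x hx
    obtain ⟨y, hyF, hyx⟩ := hF x hx
    obtain ⟨z, hzy, hzx⟩ := not_disjoint_iff.1 hyx
    rw [p.mem_closedBall] at hzy hzx
    refine mem_iUnion₂.2 ⟨y, hyF, p.mem_closedBall.2 ?_⟩
    calc p (x - y) ≤ p (x - z) + p (z - y) := le_map_sub_add_map_sub p x z y
      _ = p (z - x) + p (z - y) := by rw [map_sub_rev]
      _ ≤ 2 * r := by linarith
  exact ⟨F, hdense.trans <|
    closure_minimal hcover (F.finite_toSet.isClosed_biUnion fun y _ => hp y _)⟩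

end IsMinimalCompactInvariant

theorem exists_measure_seminorm_closedBall_ne_zero {X : Type*} [AddCommGroup X] [Module ℝ X]
    [TopologicalSpace X] [IsTopologicalAddGroup X] [ContinuousSMul ℝ X] [LocallyConvexSpace ℝ X]
    {p : Seminorm ℝ X} (hp : Continuous p) {K : Set X} (hK : K.Nonempty)
    (hKc : @IsCompact X (weakTop ℝ X) K) [MeasurableSpace X] {μ : Measure X}
    (hKμ : ∀ᵐ x ∂μ, x ∈ K)
    (hsupp : ∀ x ∈ K, ∀ U, IsOpen[weakTop ℝ X] U → x ∈ U → μ U ≠ 0) {r : ℝ} (hr : 0 < r) :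
    ∃ x ∈ K, μ (p.closedBall x r) ≠ 0 := by
  obtain ⟨U, hU, ⟨x, hxU, hxK⟩, hdiam⟩ :=
    exists_isOpen_weakTop_inter_forall_seminorm_sub_le hp hK hKc hr
  refine ⟨x, hxK, ne_bot_of_le_ne_bot (hsupp x hxK U hU hxU) (measure_mono_ae ?_)⟩
  filter_upwards [hKμ] with y hyK hyU
  exact p.mem_closedBall.2 (hdiam y ⟨hyU, hyK⟩ x ⟨hxU, hxK⟩)

theorem minimal_invariant_measure_support_totallyBounded_general {S X ι : Type*} [AddCommGroup X]
    [Module ℝ X] [TopologicalSpace X] [T2Space X] {Q : SeminormFamily ℝ X ι}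
    (hQ : WithSeminorms Q) {K : Set X} {π : S → X → X}
    (hK : @IsMinimalCompactInvariant S X (weakTop ℝ X) π K)
    (hπ : ∀ (i : ι) (s : S), ∀ x ∈ K, ∀ y ∈ K, Q i (π s x - π s y) ≤ Q i (x - y))
    {μ : @Measure X (@borel X (weakTop ℝ X))}
    (hprob : @IsProbabilityMeasure X (@borel X (weakTop ℝ X)) μ) (hK1 : μ K = 1)
    (hμ : ∀ s : S, ∀ A ⊆ K, @MeasurableSet X (@borel X (weakTop ℝ X)) A →
      μ {x ∈ K | π s x ∈ A} = μ A) :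
    K = {x : X | ∀ U : Set X, @IsOpen X (weakTop ℝ X) U → x ∈ U → μ U ≠ 0} ∧
    ∀ (i : ι), ∀ ε > (0 : ℝ), ∃ F : Finset X, K ⊆ ⋃ y ∈ F, {x : X | Q i (x - y) < ε} := by
  have := hQ.topologicalAddGroup
  have := hQ.continuousSMul
  have := hQ.toLocallyConvexSpace
  have hcont (i : ι) : Continuous (Q i) := hQ.continuous_seminorm i
  have hball (i : ι) := isClosed_weakTop_seminorm_closedBall (hcont i)
  let _ : MeasurableSpace X := @borel X (weakTop ℝ X)
  have hexists (i : ι) := exists_measure_seminorm_closedBall_ne_zero (K := K) (μ := μ) (hcont i)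
  have hT2 : @T2Space X (weakTop ℝ X) := t2Space_weakTop
  -- The weak topology shadows the original one from here on.
  let _ : TopologicalSpace X := weakTop ℝ X
  have : BorelSpace X := ⟨rfl⟩
  have hKclosed : IsClosed K := hK.isCompact.isClosed
  have hKμ : ∀ᵐ x ∂μ, x ∈ K := (prob_compl_eq_zero_iff hKclosed.measurableSet).2 hK1
  have hpre (s : S) (A : Set X) (hA : MeasurableSet A) : μ (π s ⁻¹' A) = μ A :=
    measure_preimage_of_forall_subset hKclosed.measurableSet hKμ (hK.mapsTo s) (hμ s) hA
  have hsupp : K = {x | ∀ U, IsOpen U → x ∈ U → μ U ≠ 0} := by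
    conv_lhs => rw [← hK.support_eq hKclosed hKμ (by simp [hK1]) hpre]
    ext x
    simp only [Measure.support_eq_forall_isOpen, pos_iff_ne_zero, mem_ofPred_eq, imp.swap]
  refine ⟨hsupp, fun i ε hε => ?_⟩
  obtain ⟨x, hxK, hx⟩ := hexists i hK.nonempty hK.isCompact hKμ hsupp.subset
    (div_pos hε four_pos)
  obtain ⟨F, hF⟩ := hK.exists_finset_subset_iUnion_closedBall hKμ hpre (hπ i) (hball i) hxK hx
  refine ⟨F, hF.trans (iUnion₂_mono fun y _ z hz => ?_)⟩
  exact ((Q i).mem_closedBall.1 hz).trans_lt (by linarith)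

/-- **Lemma (local)**: if `(S,(K,weak))` is a `Q`-nonexpansive dynamical system on a minimal
weakly compact `S`-invariant set `K` in a Hausdorff locally convex space whose topology is
generated by the seminorm family `Q`, and `μ` is an `S`-invariant Radon probability measure on
`(K, weak)`, then `K` is the support of `μ` and `K` is `τ`-totally bounded. -/
theorem minimal_invariant_measure_support_totallyBounded
    {S : Type u} [Semigroup S] [TopologicalSpace S] [T2Space S]
    (hS : IsSemitopologicalSemigroup S)
    {X : Type v} [AddCommGroup X] [Module ℝ X] [TopologicalSpace X] [T2Space X]
    {ι : Type v} [Nonempty ι] (Q : SeminormFamily ℝ X ι) (hQ : WithSeminorms Q)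
    (K : Set X) (π : S → X → X)
    -- `K` is a nonempty weakly compact set
    (hKne : K.Nonempty) (hKcpt : @IsCompact X (weakTop ℝ X) K)
    -- `(S,(K,weak))` is a dynamical system
    (hinv : ∀ s : S, MapsTo (π s) K K)
    (hact : ∀ s t : S, ∀ x ∈ K, π (s * t) x = π s (π t x))
    (horb : ∀ x ∈ K, @Continuous S X _ (weakTop ℝ X) fun s => π s x)
    (htra : ∀ s : S, @ContinuousOn X X (weakTop ℝ X) (weakTop ℝ X) (π s) K)
    -- the system is `Q`-nonexpansive
    (hne : ∀ (i : ι) (s : S), ∀ x ∈ K, ∀ y ∈ K, Q i (π s x - π s y) ≤ Q i (x - y))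
    -- `K` is a minimal such set
    (hmin : ∀ K' ⊆ K, K'.Nonempty → @IsCompact X (weakTop ℝ X) K' →
      (∀ s : S, MapsTo (π s) K' K') → K' = K)
    -- `μ` is a probability measure on the weak Borel σ-algebra, concentrated on `K`
    (μ : @Measure X (@borel X (weakTop ℝ X)))
    (hprob : @IsProbabilityMeasure X (@borel X (weakTop ℝ X)) μ)
    (hK1 : μ K = 1)
    -- `μ` is a Radon measure: inner regular with respect to weakly compact sets
    (hradon : ∀ A : Set X, @MeasurableSet X (@borel X (weakTop ℝ X)) A →
      μ A = ⨆ (C : Set X) (_ : C ⊆ A) (_ : @IsCompact X (weakTop ℝ X) C), μ C)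
    -- `μ` is `S`-invariant
    (hμinv : ∀ s : S, ∀ A ⊆ K, @MeasurableSet X (@borel X (weakTop ℝ X)) A →
      μ {x ∈ K | π s x ∈ A} = μ A) :
    -- `K` is the support of `μ` ...
    K = {x : X | ∀ U : Set X, @IsOpen X (weakTop ℝ X) U → x ∈ U → μ U ≠ 0} ∧
    -- ... and `K` is `τ`-totally bounded
    ∀ (i : ι), ∀ ε > (0 : ℝ), ∃ F : Finset X, K ⊆ ⋃ y ∈ F, {x : X | Q i (x - y) < ε} := by
  exact minimal_invariant_measure_support_totallyBounded_general hQ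
    (@IsMinimalCompactInvariant.mk _ _ (weakTop ℝ X) _ _ hKne hKcpt hinv htra hmin)
    hne hprob hK1 hμinv
end
end

section
/- Let S be a semitopological semigroup, let (S,(K,weak)) be a Q-nonexpansive dynamical system, where K is a weakly compact convex subset of a Hausdorff locally convex space (X,τ) whose topology is determined by a family Q of seminorms, and let Y be a closed linear subspace of ℓ∞(S) containing the constants and invariant under left and right translations. Suppose that for every y ∈ K and every weakly continuous function f: K → ℂ, the function f_y: S → ℂ defined by f_y(s) = f(sy) belongs to Y. If Y has a left invariant mean, then there exists x ∈ K with sx = x for every s ∈ S. -/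
open Set MeasureTheory
open scoped ENNReal

noncomputable section

universe u v

/-- `ℓ∞(S)`: the Banach space of bounded complex valued functions on `S` with the sup norm. -/
abbrev ellInfty (S : Type u) : Type u := lp (fun _ : S => ℂ) ∞

/-!
Choose a minimal nonempty compact convex invariant set `K₀ ⊆ K` and a minimal nonempty compact
invariant set `M ⊆ K₀`, both for the weak topology. Pushing the invariant mean forward along an
orbit in `M` gives, by Riesz representation, an invariant Radon probability `ν` on `M`; its support
is closed and invariant, hence all of `M`, so every translation maps `M` onto `M`.

Let `q` be one of the seminorms and `δ > 0`. Some nonempty weakly open `U ⊆ M` has `q`-diameter at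
most `δ`: otherwise repeated splitting produces continuum many points of `M`, pairwise more than
`δ` apart, in the weak closure of a countable set, which by Mazur's theorem is separable. The
points whose closed `q`-ball of radius `δ` has measure at least `ν U > 0` form a nonempty closed
set, invariant by nonexpansiveness, so they exhaust `M`. Only finitely many such balls can be
disjoint, and `M` is totally bounded for `q`.

If `M` had positive `q`-diameter, the average of the points of a fine finite net would be a point
of `K₀` within some `r` of every point of `M`, with `r` less than that diameter (DeMarr). All such
points of `K₀` form a compact convex set, invariant because translations map `M` onto `M`; by
minimality it is `K₀ ⊇ M`, a contradiction. So `M` has diameter zero for each seminorm and is a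
single fixed point.
-/

open Topology
open scoped SetRel ComplexOrder

section Fragmentation

variable {M : Type*} [TopologicalSpace M] {E : Set (M × M)} {W : List Bool → Set M}

theorem exists_isOpen_closure_prod_subset_diff [RegularSpace M] (hE : IsClosed E) {U : Set M}
    (hU : IsOpen U) (hUE : ¬U ×ˢ U ⊆ E) :
    ∃ V W : Set M, IsOpen V ∧ V.Nonempty ∧ IsOpen W ∧ W.Nonempty ∧
      closure V ×ˢ closure W ⊆ (U ×ˢ U) \ E := by
  obtain ⟨⟨x, y⟩, hxy, hxyE⟩ := not_subset.1 hUE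
  have hmem : (U ×ˢ U) \ E ∈ 𝓝 (x, y) := ((hU.prod hU).sdiff hE).mem_nhds ⟨hxy, hxyE⟩
  rw [nhds_prod_eq, ((hasBasis_opens_closure x).prod (hasBasis_opens_closure y)).mem_iff] at hmem
  obtain ⟨⟨V, W⟩, ⟨⟨hxV, hV⟩, hyW, hW⟩, hVW⟩ := hmem
  exact ⟨V, W, hV, ⟨x, hxV⟩, hW, ⟨y, hyW⟩, hVW⟩

/-- A Cantor scheme of nonempty sets, indexed by finite binary words, whose two children at every
node have closures inside the parent that are nowhere `E`-related. Points on distinct branches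
are then not `E`-related, so a set all of whose points are `E`-related meets at most one branch. -/
structure IsSplittingScheme (E : Set (M × M)) (W : List Bool → Set M) : Prop where
  nonempty : ∀ l, (W l).Nonempty
  split : ∀ l, closure (W (false :: l)) ×ˢ closure (W (true :: l)) ⊆ (W l ×ˢ W l) \ E

theorem exists_isSplittingScheme [RegularSpace M] [Nonempty M] (hE : IsClosed E)
    (hsplit : ∀ U : Set M, IsOpen U → U.Nonempty → ¬U ×ˢ U ⊆ E) :
    ∃ W, IsSplittingScheme E W := by
  choose left right hleft hleft_ne hright hright_ne hdiff using
    fun U : {U : Set M // IsOpen U ∧ U.Nonempty} ↦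
      exists_isOpen_closure_prod_subset_diff hE U.2.1 (hsplit U U.2.1 U.2.2)
  let child (b : Bool) (U : {U : Set M // IsOpen U ∧ U.Nonempty}) :
      {U : Set M // IsOpen U ∧ U.Nonempty} :=
    bif b then ⟨right U, hright U, hright_ne U⟩ else ⟨left U, hleft U, hleft_ne U⟩
  let W (l : List Bool) : {U : Set M // IsOpen U ∧ U.Nonempty} :=
    l.foldr child ⟨univ, isOpen_univ, univ_nonempty⟩
  exact ⟨fun l ↦ W l, fun l ↦ (W l).2.2, fun l ↦ hdiff (W l)⟩

namespace IsSplittingScheme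

theorem closureAntitone (hW : IsSplittingScheme E W) : CantorScheme.ClosureAntitone W := by
  intro l b
  cases b with
  | false => exact fun x hx ↦ (hW.split l (mk_mem_prod hx (hW.nonempty _).closure.some_mem)).1.1
  | true => exact fun x hx ↦ (hW.split l (mk_mem_prod (hW.nonempty _).closure.some_mem hx)).1.2

theorem exists_mem_iInter_branch [CompactSpace M] (hW : IsSplittingScheme E W) {p : List Bool → M}
    (hp : ∀ l, p l ∈ W l) (b : ℕ → Bool) :
    ∃ x ∈ closure (range p), ∀ n, x ∈ closure (W (PiNat.res b n)) := by
  have hanti (n : ℕ) : W (PiNat.res b (n + 1)) ⊆ W (PiNat.res b n) :=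
    hW.closureAntitone.antitone _ _
  obtain ⟨x, hx⟩ := IsCompact.nonempty_iInter_of_sequence_nonempty_isCompact_isClosed
    (fun n ↦ closure (W (PiNat.res b n) ∩ range p))
    (fun n ↦ closure_mono (inter_subset_inter_left _ (hanti n)))
    (fun n ↦ (show (W (PiNat.res b n) ∩ range p).Nonempty from
      ⟨_, hp _, mem_range_self _⟩).closure)
    isClosed_closure.isCompact (fun n ↦ isClosed_closure)
  rw [mem_iInter] at hx
  exact ⟨x, closure_mono inter_subset_right (hx 0), fun n ↦ closure_mono inter_subset_left (hx n)⟩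

theorem branch_eq_of_prod_subset (hW : IsSplittingScheme E W) {b c : ℕ → Bool} {x y : M}
    (hx : ∀ n, x ∈ closure (W (PiNat.res b n))) (hy : ∀ n, y ∈ closure (W (PiNat.res c n)))
    {C : Set M} (hC : C ×ˢ C ⊆ E) (hxC : x ∈ C) (hyC : y ∈ C) : b = c := by
  by_contra hbc
  set n := PiNat.firstDiff b c
  have hres : PiNat.res b n = PiNat.res c n :=
    PiNat.res_eq_res.2 fun m hm ↦ PiNat.apply_eq_of_lt_firstDiff hm
  have hn : b n ≠ c n := PiNat.apply_firstDiff_ne hbc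
  have hxn := hx (n + 1)
  have hyn := hy (n + 1)
  rw [PiNat.res_succ, hres] at hxn
  rw [PiNat.res_succ] at hyn
  cases hb : b n <;> cases hc : c n <;> rw [hb] at hxn hn <;> rw [hc] at hyn hn
  · exact hn rfl
  · exact (hW.split _ (mk_mem_prod hxn hyn)).2 (hC (mk_mem_prod hxC hyC))
  · exact (hW.split _ (mk_mem_prod hyn hxn)).2 (hC (mk_mem_prod hyC hxC))
  · exact hn rfl

end IsSplittingScheme

theorem exists_isOpen_prod_subset_of_countable_cover [CompactSpace M] [RegularSpace M] [Nonempty M]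
    (hE : IsClosed E)
    (hcover : ∀ A : Set M, A.Countable →
      ∃ 𝒞 : Set (Set M), 𝒞.Countable ∧ closure A ⊆ ⋃₀ 𝒞 ∧ ∀ C ∈ 𝒞, C ×ˢ C ⊆ E) :
    ∃ U : Set M, IsOpen U ∧ U.Nonempty ∧ U ×ˢ U ⊆ E := by
  by_contra! hsplit
  obtain ⟨W, hW⟩ := exists_isSplittingScheme hE hsplit
  choose p hp using hW.nonempty
  obtain ⟨𝒞, h𝒞, hsub, h𝒞E⟩ := hcover (range p) (countable_range p)
  choose x hx hxW using hW.exists_mem_iInter_branch hp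
  choose C hC hxC using fun b ↦ hsub (hx b)
  have hinj : Function.Injective fun b ↦ (⟨C b, hC b⟩ : 𝒞) := fun b c hbc ↦
    hW.branch_eq_of_prod_subset (hxW b) (hxW c) (h𝒞E _ (hC b)) (hxC b)
      (Subtype.mk.inj hbc ▸ hxC c)
  have : Countable 𝒞 := h𝒞
  have huncountable : Uncountable (ℕ → Bool) := by
    simp [← Cardinal.aleph0_lt_mk_iff, Cardinal.aleph0_lt_continuum]
  exact huncountable.not_countable hinj.countable

end Fragmentation

section WeakTopology

variable {X : Type*} [AddCommGroup X] [Module ℝ X] [TopologicalSpace X]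

theorem weakTop_eq_weakSpace : weakTop ℝ X = instTopologicalSpaceWeakSpace ℝ X := by
  refine Eq.trans ?_ (induced_iInf (g := fun x y ↦ (topDualPairing ℝ X).flip x y)).symm
  simp_rw [induced_compose]
  rfl

variable [IsTopologicalAddGroup X] {q : Seminorm ℝ X} {δ : ℝ}

theorem exists_countable_seminorm_sub_le_of_isSeparable (hq : Continuous q) (hδ : 0 < δ) {s : Set X}
    (hs : TopologicalSpace.IsSeparable s) :
    ∃ D : Set X, D.Countable ∧ ∀ x ∈ s, ∃ d ∈ D, q (x - d) ≤ δ := by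
  obtain ⟨D, hD, hsD⟩ := hs
  refine ⟨D, hD, fun x hx ↦ ?_⟩
  have hopen : IsOpen {d | q (x - d) < δ} :=
    isOpen_lt (hq.comp (continuous_const.sub continuous_id)) continuous_const
  obtain ⟨d, hd, hdD⟩ := mem_closure_iff.1 (hsD hx) _ hopen (by simpa using hδ)
  exact ⟨d, hdD, hd.le⟩

variable [ContinuousSMul ℝ X] [LocallyConvexSpace ℝ X]

theorem isClosed_toWeakSpace_symm_preimage {s : Set X} (hs : IsClosed s) (hcv : Convex ℝ s) :
    IsClosed ((toWeakSpace ℝ X).symm ⁻¹' s) := by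
  rw [← LinearEquiv.image_eq_preimage_symm, ← closure_subset_iff_isClosed,
    ← hcv.toWeakSpace_closure ℝ, hs.closure_eq]

theorem isClosed_toWeakSpace_symm_seminorm_sub_le (hq : Continuous q) (r : ℝ) :
    IsClosed {z : WeakSpace ℝ X × WeakSpace ℝ X |
      q ((toWeakSpace ℝ X).symm (z.1 - z.2)) ≤ r} := by
  have hball : IsClosed ((toWeakSpace ℝ X).symm ⁻¹' q.closedBall 0 r) := by
    refine isClosed_toWeakSpace_symm_preimage ?_ (q.convex_closedBall 0 r)
    simpa only [q.closedBall_zero_eq] using isClosed_le hq continuous_const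
  rw [q.closedBall_zero_eq] at hball
  exact hball.preimage (continuous_fst.sub continuous_snd)

theorem isSeparable_toWeakSpace_preimage_closure {A : Set (WeakSpace ℝ X)} (hA : A.Countable) :
    TopologicalSpace.IsSeparable (toWeakSpace ℝ X ⁻¹' closure A) := by
  set V : Submodule ℝ X := Submodule.span ℝ (toWeakSpace ℝ X ⁻¹' A)
  have hV : TopologicalSpace.IsSeparable (closure (V : Set X)) :=
    (hA.preimage (toWeakSpace ℝ X).injective).isSeparable.span.closure
  have hAV : A ⊆ (toWeakSpace ℝ X).symm ⁻¹' closure (V : Set X) :=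
    (preimage_mono (Submodule.subset_span.trans subset_closure) :
      (toWeakSpace ℝ X).symm ⁻¹' (toWeakSpace ℝ X ⁻¹' A) ⊆ _)
  have hclosure : closure A ⊆ (toWeakSpace ℝ X).symm ⁻¹' closure (V : Set X) :=
    closure_minimal hAV (isClosed_toWeakSpace_symm_preimage isClosed_closure V.convex.closure)
  exact hV.mono (preimage_mono hclosure)

theorem exists_countable_cover_weakSpace_closure (hq : Continuous q) (hδ : 0 < δ)
    {A : Set (WeakSpace ℝ X)} (hA : A.Countable) :
    ∃ 𝒞 : Set (Set (WeakSpace ℝ X)), 𝒞.Countable ∧ closure A ⊆ ⋃₀ 𝒞 ∧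
      ∀ C ∈ 𝒞, ∀ x ∈ C, ∀ y ∈ C, q ((toWeakSpace ℝ X).symm (x - y)) ≤ δ := by
  obtain ⟨D, hD, hAD⟩ := exists_countable_seminorm_sub_le_of_isSeparable hq (half_pos hδ)
    (isSeparable_toWeakSpace_preimage_closure hA)
  refine ⟨(fun d ↦ (toWeakSpace ℝ X).symm ⁻¹' q.closedBall d (δ / 2)) '' D, hD.image _,
    fun x hx ↦ ?_, ?_⟩
  · obtain ⟨d, hd, hxd⟩ := hAD ((toWeakSpace ℝ X).symm x) (by simpa using hx)
    exact ⟨_, mem_image_of_mem _ hd, q.mem_closedBall.2 hxd⟩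
  · rintro _ ⟨d, -, rfl⟩ x hx y hy
    rw [mem_preimage, q.mem_closedBall] at hx hy
    rw [map_sub]
    calc q ((toWeakSpace ℝ X).symm x - (toWeakSpace ℝ X).symm y)
        ≤ q ((toWeakSpace ℝ X).symm x - d) + q (d - (toWeakSpace ℝ X).symm y) :=
          le_map_sub_add_map_sub ..
      _ ≤ δ / 2 + δ / 2 := add_le_add hx (map_sub_rev q _ d ▸ hy)
      _ = δ := add_halves δ

theorem exists_isOpen_weakSpace_seminorm_sub_le (hq : Continuous q) (hδ : 0 < δ)
    {M : Set (WeakSpace ℝ X)} (hM : IsCompact M) (hMne : M.Nonempty) :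
    ∃ U : Set M, IsOpen U ∧ U.Nonempty ∧
      ∀ x ∈ U, ∀ y ∈ U, q ((toWeakSpace ℝ X).symm (x - y)) ≤ δ := by
  have := isCompact_iff_compactSpace.1 hM
  have := hMne.to_subtype
  let E : Set (M × M) := {z | q ((toWeakSpace ℝ X).symm (z.1 - z.2)) ≤ δ}
  have hE : IsClosed E := (isClosed_toWeakSpace_symm_seminorm_sub_le hq δ).preimage
    (continuous_subtype_val.prodMap continuous_subtype_val)
  obtain ⟨U, hU, hUne, hUE⟩ := exists_isOpen_prod_subset_of_countable_cover hE fun A hA ↦ by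
    obtain ⟨𝒞, h𝒞, hsub, hdiam⟩ :=
      exists_countable_cover_weakSpace_closure hq hδ (hA.image Subtype.val)
    refine ⟨preimage Subtype.val '' 𝒞, h𝒞.image _, fun x hx ↦ ?_, ?_⟩
    · obtain ⟨C, hC, hxC⟩ := hsub (closure_subtype.1 hx)
      exact ⟨_, mem_image_of_mem _ hC, hxC⟩
    · rintro _ ⟨C, hC, rfl⟩ ⟨x, y⟩ ⟨hx, hy⟩
      exact hdiam C hC x hx y hy
  exact ⟨U, hU, hUne, fun x hx y hy ↦ hUE (mk_mem_prod hx hy)⟩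

end WeakTopology

section FiniteCover

variable {M : Type*} [MeasurableSpace M] {ν : Measure M} [IsFiniteMeasure ν] {E : SetRel M M}
  {c : ℝ≥0∞}

theorem finite_of_isSeparated_comp_of_le_measure [E.IsSymm]
    (hE : ∀ x, MeasurableSet (Prod.mk x ⁻¹' E)) (hc : 0 < c)
    (hcE : ∀ x, c ≤ ν (Prod.mk x ⁻¹' E)) {N : Set M} (hN : (E ○ E).IsSeparated N) : N.Finite := by
  have hdisj : Pairwise fun x y : N ↦ Disjoint (Prod.mk x.1 ⁻¹' E) (Prod.mk y.1 ⁻¹' E) := by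
    refine fun x y hxy ↦ disjoint_left.2 fun z hxz hyz ↦ ?_
    exact hN x.2 y.2 (Subtype.coe_ne_coe.2 hxy) ⟨z, hxz, E.symm hyz⟩
  have hfin := Measure.finite_const_le_meas_of_disjoint_iUnion ν hc (fun x : N ↦ hE x) hdisj
    (measure_ne_top ν _)
  simpa [hcE, finite_univ_iff, finite_coe_iff] using hfin

theorem exists_finite_isCover_comp_of_le_measure [E.IsRefl] [E.IsSymm]
    (hE : ∀ x, MeasurableSet (Prod.mk x ⁻¹' E)) (hc : 0 < c)
    (hcE : ∀ x, c ≤ ν (Prod.mk x ⁻¹' E)) : ∃ N : Set M, N.Finite ∧ (E ○ E).IsCover univ N := by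
  obtain ⟨N, hN⟩ := zorn_subset {N : Set M | N ⊆ univ ∧ (E ○ E).IsSeparated N} fun 𝒩 h𝒩 hchain ↦
    ⟨⋃₀ 𝒩, ⟨subset_univ _, (pairwise_sUnion hchain.directedOn).2 fun N hN ↦ (h𝒩 hN).2⟩,
      fun N hN ↦ subset_sUnion_of_mem hN⟩
  exact ⟨N, finite_of_isSeparated_comp_of_le_measure hE hc hcE hN.1.2, .of_maximal_isSeparated hN⟩

end FiniteCover

section MinimalSystem

variable {S M : Type*} [TopologicalSpace M]

/-- A family of self-maps of a topological space is minimal if the whole space is the only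
nonempty closed set invariant under all of them. The dynamical system is given by its family of
translations, without any structure on the index type. -/
def IsMinimalSystem (T : S → M → M) : Prop :=
  ∀ F : Set M, IsClosed F → F.Nonempty → (∀ s, MapsTo (T s) F F) → F = univ

variable [MeasurableSpace M] {ν : Measure M} {T : S → M → M}

theorem nonempty_measure_support [CompactSpace M] [NeZero ν] : ν.support.Nonempty := by
  rw [nonempty_iff_ne_empty]
  intro h
  refine NeZero.ne ν (Measure.measure_univ_eq_zero.1 ?_)
  exact Measure.measure_eq_zero_of_isCompact_subset_compl_support isCompact_univ (by simp [h])

theorem upperSemicontinuous_measure_prodMk_preimage {N : Type*} [TopologicalSpace N]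
    [CompactSpace M] [ν.OuterRegular] {E : Set (N × M)} (hE : IsClosed E) :
    UpperSemicontinuous fun x ↦ ν (Prod.mk x ⁻¹' E) := by
  intro x c hc
  obtain ⟨V, hEV, hV, hVc⟩ := Set.exists_isOpen_lt_of_lt _ c hc
  have hclosed : IsClosed (Prod.fst '' (E ∩ Prod.snd ⁻¹' Vᶜ)) :=
    isClosedMap_fst_of_compactSpace _ (hE.inter (hV.isClosed_compl.preimage continuous_snd))
  have hx : x ∉ Prod.fst '' (E ∩ Prod.snd ⁻¹' Vᶜ) := by
    rintro ⟨⟨_, y⟩, ⟨hyE, hyV⟩, rfl⟩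
    exact hyV (hEV hyE)
  filter_upwards [hclosed.isOpen_compl.mem_nhds hx] with x' hx'
  refine (measure_mono fun y hy ↦ ?_).trans_lt hVc
  by_contra hyV
  exact hx' ⟨(x', y), ⟨hy, hyV⟩, rfl⟩

variable [OpensMeasurableSpace M]

theorem mapsTo_measure_support {f : M → M} (hf : Continuous f) (hν : MeasurePreserving f ν ν) :
    MapsTo f ν.support ν.support := by
  simp only [Measure.support_eq_forall_isOpen]
  intro x hx V hxV hV
  rw [← hν.measure_preimage hV.measurableSet.nullMeasurableSet]
  exact hx _ hxV (hV.preimage hf)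

theorem surjective_of_measurePreserving_isOpenPosMeasure [ν.IsOpenPosMeasure] {f : M → M}
    (hf : IsClosed (range f)) (hν : MeasurePreserving f ν ν) : Function.Surjective f := by
  have hnull : ν (range f)ᶜ = 0 := by
    rw [← hν.measure_preimage hf.isOpen_compl.measurableSet.nullMeasurableSet]
    simp
  rw [← range_eq_univ, ← compl_empty_iff]
  exact (hf.isOpen_compl.measure_eq_zero_iff ν).1 hnull

namespace IsMinimalSystem

variable [CompactSpace M]

theorem isOpenPosMeasure [NeZero ν] (hT : IsMinimalSystem T) (hcont : ∀ s, Continuous (T s))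
    (hν : ∀ s, MeasurePreserving (T s) ν ν) : ν.IsOpenPosMeasure where
  open_pos U hU hUne := by
    have hsupp : ν.support = univ := hT _ Measure.isClosed_support nonempty_measure_support
      fun s ↦ mapsTo_measure_support (hcont s) (hν s)
    obtain ⟨x, hx⟩ := hUne
    have hx_supp : x ∈ ν.support := hsupp ▸ mem_univ x
    exact ((Measure.mem_support_iff_forall x).1 hx_supp U (hU.mem_nhds hx)).ne'

theorem surjective [T2Space M] [NeZero ν] (hT : IsMinimalSystem T) (hcont : ∀ s, Continuous (T s))
    (hν : ∀ s, MeasurePreserving (T s) ν ν) (s : S) : Function.Surjective (T s) :=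
  have := hT.isOpenPosMeasure hcont hν
  surjective_of_measurePreserving_isOpenPosMeasure (isCompact_range (hcont s)).isClosed (hν s)

theorem measure_le_measure_prodMk_preimage [ν.OuterRegular] (hT : IsMinimalSystem T)
    (hν : ∀ s, MeasurePreserving (T s) ν ν) {E : Set (M × M)} (hE : IsClosed E)
    (hTE : ∀ s, ∀ z ∈ E, (T s z.1, T s z.2) ∈ E) {U : Set M} (hUne : U.Nonempty)
    (hUE : U ×ˢ U ⊆ E) (x : M) : ν U ≤ ν (Prod.mk x ⁻¹' E) := by
  have hmeas (x : M) : MeasurableSet (Prod.mk x ⁻¹' E) :=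
    (hE.preimage (Continuous.prodMk_right x)).measurableSet
  suffices h : {x | ν U ≤ ν (Prod.mk x ⁻¹' E)} = univ from eq_univ_iff_forall.1 h x
  refine hT _ ?_ ?_ ?_
  · exact upperSemicontinuous_iff_isClosed_preimage.1
      (upperSemicontinuous_measure_prodMk_preimage hE) (ν U)
  · obtain ⟨x, hx⟩ := hUne
    exact ⟨x, measure_mono fun y hy ↦ hUE (mk_mem_prod hx hy)⟩
  · intro s x hx
    calc ν U ≤ ν (Prod.mk x ⁻¹' E) := hx
      _ ≤ ν (T s ⁻¹' (Prod.mk (T s x) ⁻¹' E)) := measure_mono fun y hy ↦ hTE s (x, y) hy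
      _ = ν (Prod.mk (T s x) ⁻¹' E) := (hν s).measure_preimage (hmeas _).nullMeasurableSet

theorem exists_finite_isCover_comp [ν.OuterRegular] [IsFiniteMeasure ν] [NeZero ν]
    (hT : IsMinimalSystem T) (hcont : ∀ s, Continuous (T s))
    (hν : ∀ s, MeasurePreserving (T s) ν ν) {E : SetRel M M} [E.IsRefl] [E.IsSymm]
    (hE : IsClosed E) (hTE : ∀ s, ∀ z ∈ E, (T s z.1, T s z.2) ∈ E) {U : Set M} (hU : IsOpen U)
    (hUne : U.Nonempty) (hUE : U ×ˢ U ⊆ E) : ∃ N : Set M, N.Finite ∧ (E ○ E).IsCover univ N :=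
  have := hT.isOpenPosMeasure hcont hν
  exists_finite_isCover_comp_of_le_measure
    (fun x ↦ (hE.preimage (Continuous.prodMk_right x)).measurableSet) (hU.measure_pos ν hUne)
    (hT.measure_le_measure_prodMk_preimage hν hE hTE hUne hUE)

end IsMinimalSystem

end MinimalSystem

section InvariantMeasure

variable {S M : Type*} [TopologicalSpace M] [CompactSpace M]

theorem re_map_nonneg_of_norm_le_one {μ : ellInfty S →L[ℂ] ℂ} (hμ : ‖μ‖ ≤ 1) (hone : μ 1 = 1)
    {f : ellInfty S} (hf : ∀ s, 0 ≤ f s) : 0 ≤ (μ f).re := by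
  have hnorm : ‖(‖f‖ : ℂ) • 1 - f‖ ≤ ‖f‖ := by
    refine lp.norm_le_of_forall_le (norm_nonneg f) fun s ↦ ?_
    have hfs : f s = ((f s).re : ℂ) := Complex.eq_re_of_ofReal_le (hf s)
    have hre : 0 ≤ (f s).re := (Complex.nonneg_iff.1 (hf s)).1
    have hle : (f s).re ≤ ‖f‖ :=
      (Complex.re_le_norm _).trans (lp.norm_apply_le_norm ENNReal.top_ne_zero f s)
    change ‖(‖f‖ : ℂ) * 1 - f s‖ ≤ ‖f‖
    rw [mul_one, hfs, ← Complex.ofReal_sub, Complex.norm_of_nonneg (sub_nonneg.2 hle)]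
    linarith
  have hμnorm : ‖(‖f‖ : ℂ) - μ f‖ ≤ ‖f‖ := by
    calc ‖(‖f‖ : ℂ) - μ f‖ = ‖μ ((‖f‖ : ℂ) • 1 - f)‖ := by rw [map_sub, map_smul, hone]; simp
      _ ≤ ‖(‖f‖ : ℂ) • 1 - f‖ := μ.le_of_opNorm_le_of_le hμ le_rfl |>.trans_eq (one_mul _)
      _ ≤ ‖f‖ := hnorm
  have hre := (Complex.re_le_norm _).trans hμnorm
  rw [Complex.sub_re, Complex.ofReal_re] at hre
  linarith

/-- Composition with a map `o : S → M` as a map `C(M, ℝ) → ℓ∞(S)`; for the orbit map `o s = s y`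
it sends `f` to the function `f_y` of the theorem. -/
def pullback (o : S → M) : C(M, ℝ) →ₗ[ℝ] ellInfty S where
  toFun f := ⟨fun s ↦ (f (o s) : ℂ), memℓp_infty ⟨‖f‖, by
    rintro _ ⟨s, rfl⟩
    simpa using f.norm_coe_le_norm (o s)⟩⟩
  map_add' f g := by ext s; exact Complex.ofReal_add _ _
  map_smul' c f := by ext s; exact Complex.ofReal_mul _ _

@[simp]
theorem pullback_apply (o : S → M) (f : C(M, ℝ)) (s : S) : pullback o f s = f (o s) := rfl

variable [T2Space M] [MeasurableSpace M] [BorelSpace M]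

theorem exists_regular_integral_eq {Λ : C(M, ℝ) →ₗ[ℝ] ℝ} (hΛ : ∀ f, 0 ≤ f → 0 ≤ Λ f) :
    ∃ ν : Measure M, ν.Regular ∧ ∀ f : C(M, ℝ), ∫ x, f x ∂ν = Λ f := by
  let toC : CompactlySupportedContinuousMap M ℝ →ₗ[ℝ] C(M, ℝ) :=
    { toFun f := f, map_add' _ _ := rfl, map_smul' _ _ := rfl }
  let Λc := PositiveLinearMap.mk₀ (Λ ∘ₗ toC) fun f hf ↦ hΛ _ hf
  exact ⟨RealRMK.rieszMeasure Λc, inferInstance, fun f ↦ RealRMK.integral_rieszMeasure Λc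
    (CompactlySupportedContinuousMap.continuousMapEquiv f)⟩

theorem measurePreserving_of_integral_comp_eq {ν : Measure M} [ν.Regular] {f : M → M}
    (hf : Continuous f) (hint : ∀ g : C(M, ℝ), ∫ x, g (f x) ∂ν = ∫ x, g x ∂ν) :
    MeasurePreserving f ν ν := by
  refine ⟨hf.measurable, ?_⟩
  have := Measure.InnerRegularCompactLTTop.map_of_continuous (μ := ν) hf
  refine Measure.ext_of_integral_eq_on_compactlySupported fun g ↦ ?_
  exact (integral_map hf.aemeasurable g.continuous.aestronglyMeasurable).trans (hint g)

theorem exists_regular_measurePreserving {Λ : C(M, ℝ) →ₗ[ℝ] ℝ} (hΛ : ∀ f, 0 ≤ f → 0 ≤ Λ f)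
    (hone : Λ 1 = 1) {T : S → M → M} (hT : ∀ s, Continuous (T s))
    (hinv : ∀ s f, Λ (f.comp ⟨T s, hT s⟩) = Λ f) :
    ∃ ν : Measure M, ν.Regular ∧ IsProbabilityMeasure ν ∧ ∀ s, MeasurePreserving (T s) ν ν := by
  obtain ⟨ν, hreg, hν⟩ := exists_regular_integral_eq hΛ
  refine ⟨ν, hreg, ?_, fun s ↦ measurePreserving_of_integral_comp_eq (hT s) fun g ↦ ?_⟩
  · have hν_one := (hν 1).trans hone
    exact ⟨by simpa [Measure.real, ENNReal.toReal_eq_one_iff] using hν_one⟩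
  · rw [hν g, ← hinv s g, ← hν]
    rfl

theorem exists_regular_measurePreserving_of_mean {μ : ellInfty S →L[ℂ] ℂ} (hμ : ‖μ‖ ≤ 1)
    (hone : μ 1 = 1) {T : S → M → M} (hT : ∀ s, Continuous (T s)) {o : S → M}
    (hinv : ∀ s f, μ (pullback o (f.comp ⟨T s, hT s⟩)) = μ (pullback o f)) :
    ∃ ν : Measure M, ν.Regular ∧ IsProbabilityMeasure ν ∧ ∀ s, MeasurePreserving (T s) ν ν := by
  let Λ : C(M, ℝ) →ₗ[ℝ] ℝ :=
    Complex.reLm ∘ₗ (μ : ellInfty S →ₗ[ℂ] ℂ).restrictScalars ℝ ∘ₗ pullback o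
  have hΛ (f : C(M, ℝ)) (hf : 0 ≤ f) : 0 ≤ Λ f :=
    re_map_nonneg_of_norm_le_one hμ hone fun s ↦ Complex.zero_le_real.2 (hf (o s))
  have hpullback_one : pullback o 1 = 1 := by ext; exact Complex.ofReal_one
  have hΛ_one : Λ 1 = 1 := by simp [Λ, hpullback_one, hone]
  exact exists_regular_measurePreserving hΛ hΛ_one hT fun s f ↦ congrArg Complex.re (hinv s f)

end InvariantMeasure

section Subsystem

variable {E : Type*} [TopologicalSpace E] [T2Space E] {K M : Set E}

theorem exists_continuousOn_extension (hK : IsCompact K) (hM : IsCompact M) (hMK : M ⊆ K)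
    (f : C(M, ℝ)) : ∃ g : E → ℝ, ContinuousOn g K ∧ ∀ x : M, g x = f x := by
  have := isCompact_iff_compactSpace.1 hK
  have := isCompact_iff_compactSpace.1 hM
  obtain ⟨g, hg⟩ := f.exists_extension'
    ((continuous_inclusion hMK).isClosedEmbedding (inclusion_injective hMK))
  have hext (x : K) : Function.extend Subtype.val g 0 x = g x :=
    Subtype.val_injective.extend_apply g 0 x
  refine ⟨Function.extend Subtype.val g 0, ?_, fun x ↦ (hext _).trans (congrFun hg x)⟩
  rw [continuousOn_iff_continuous_domRestrict]
  exact g.continuous.congr fun x ↦ (hext x).symm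

theorem pullback_mem_of_continuousOn {S : Type*} {Y : Set (ellInfty S)} [CompactSpace M]
    (hK : IsCompact K) (hMK : M ⊆ K) {o : S → M}
    (hY : ∀ f : E → ℂ, ContinuousOn f K → ∃ h : ellInfty S, (∀ s, h s = f (o s)) ∧ h ∈ Y)
    (f : C(M, ℝ)) : pullback o f ∈ Y := by
  obtain ⟨g, hg, hgf⟩ := exists_continuousOn_extension hK
    (isCompact_iff_compactSpace.2 inferInstance) hMK f
  obtain ⟨h, hh, hhY⟩ := hY (fun x ↦ g x) (Complex.continuous_ofReal.comp_continuousOn hg)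
  have : pullback o f = h := by ext s; rw [hh, hgf, pullback_apply]
  rwa [this]

theorem exists_regular_measurePreserving_restrict {S : Type*} [Mul S] [MeasurableSpace E]
    [BorelSpace E] (hK : IsCompact K) {T : S → E → E} (hcont : ∀ s, ContinuousOn (T s) K)
    (hact : ∀ s t, ∀ x ∈ K, T (s * t) x = T s (T t x)) {Y : Set (ellInfty S)}
    (hY : ∀ y ∈ K, ∀ f : E → ℂ, ContinuousOn f K →
      ∃ h : ellInfty S, (∀ s, h s = f (T s y)) ∧ h ∈ Y)
    {μ : ellInfty S →L[ℂ] ℂ} (hμ : ‖μ‖ ≤ 1) (hone : μ 1 = 1)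
    (hLIM : ∀ f ∈ Y, ∀ s, ∀ g : ellInfty S, (∀ t, g t = f (s * t)) → μ g = μ f)
    (hM : IsCompact M) (hMne : M.Nonempty) (hMK : M ⊆ K) (hTM : ∀ s, MapsTo (T s) M M) :
    ∃ ν : Measure M, ν.Regular ∧ IsProbabilityMeasure ν ∧
      ∀ s, MeasurePreserving (hTM s).restrict ν ν := by
  have := isCompact_iff_compactSpace.1 hM
  obtain ⟨y, hy⟩ := hMne
  let o (s : S) : M := ⟨T s y, hTM s hy⟩
  refine exists_regular_measurePreserving_of_mean hμ hone
    (fun s ↦ ((hcont s).mono hMK).mapsToRestrict (hTM s)) (o := o) fun s f ↦ ?_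
  refine hLIM _ (pullback_mem_of_continuousOn hK hMK (hY y (hMK hy)) f) s _ fun t ↦ ?_
  simp only [pullback_apply, o, hact s t y (hMK hy)]
  rfl

end Subsystem

section NormalStructure

variable {E : Type*} [AddCommGroup E] [Module ℝ E] {q : Seminorm ℝ E} {M : Set E}

theorem exists_mem_convexHull_forall_seminorm_sub_le {t : Finset E} (ht : t.Nonempty) {r D : ℝ}
    (hrD : r < D) (hr : ∀ y ∈ M, ∃ a ∈ t, q (a - y) ≤ r) (hD : ∀ a ∈ t, ∀ y ∈ M, q (a - y) ≤ D) :
    ∃ u ∈ convexHull ℝ (t : Set E), ∃ r' < D, ∀ y ∈ M, q (u - y) ≤ r' := by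
  have hcard : (0 : ℝ) < t.card := by exact_mod_cast ht.card_pos
  -- In the average, the net point within `r` of `y` makes up for the others.
  have hsum (y : E) (hy : y ∈ M) : ∑ a ∈ t, q (a - y) ≤ t.card * D - (D - r) := by
    obtain ⟨a, ha, hay⟩ := hr y hy
    have hle : D - q (a - y) ≤ ∑ b ∈ t, (D - q (b - y)) :=
      Finset.single_le_sum (f := fun b ↦ D - q (b - y)) (fun b hb ↦ sub_nonneg.2 (hD b hb y hy)) ha
    rw [Finset.sum_sub_distrib, Finset.sum_const, nsmul_eq_mul] at hle
    linarith
  refine ⟨t.centerMass (fun _ ↦ (1 : ℝ)) id, t.centerMass_mem_convexHull (by simp) (by simpa)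
    (fun a ha ↦ ha), (t.card : ℝ)⁻¹ * (t.card * D - (D - r)), ?_, fun y hy ↦ ?_⟩
  · rw [inv_mul_lt_iff₀ hcard]
    linarith
  · have hcenter : t.centerMass (fun _ ↦ (1 : ℝ)) id - y = (t.card : ℝ)⁻¹ • ∑ a ∈ t, (a - y) := by
      simp [Finset.centerMass, smul_sub, ← Nat.cast_smul_eq_nsmul ℝ, hcard.ne']
    calc q (t.centerMass (fun _ ↦ (1 : ℝ)) id - y)
        = (t.card : ℝ)⁻¹ * q (∑ a ∈ t, (a - y)) := by
          rw [hcenter, map_smul_eq_mul, Real.norm_of_nonneg (inv_nonneg.2 hcard.le)]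
      _ ≤ (t.card : ℝ)⁻¹ * ∑ a ∈ t, q (a - y) := by
          gcongr
          exact Finset.le_sum_of_subadditive q (map_zero q).le (map_add_le_add q) t _
      _ ≤ (t.card : ℝ)⁻¹ * (t.card * D - (D - r)) := by gcongr; exact hsum y hy

theorem bddAbove_seminorm_sub_of_net {t : Finset E} {r : ℝ}
    (hr : ∀ y ∈ M, ∃ a ∈ t, q (a - y) ≤ r) :
    BddAbove ((fun z : E × E ↦ q (z.1 - z.2)) '' M ×ˢ M) := by
  obtain ⟨B, hB⟩ := ((t ×ˢ t).image fun z : E × E ↦ q (z.1 - z.2)).bddAbove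
  refine ⟨r + B + r, ?_⟩
  rintro _ ⟨⟨x, y⟩, ⟨hx, hy⟩, rfl⟩
  obtain ⟨a, ha, hax⟩ := hr x hx
  obtain ⟨b, hb, hby⟩ := hr y hy
  have hab : q (a - b) ≤ B :=
    hB (Finset.mem_coe.2 (Finset.mem_image.2 ⟨(a, b), Finset.mk_mem_product ha hb, rfl⟩))
  calc q (x - y) = q ((x - a) + (a - b) + (b - y)) := by congr 1; abel
    _ ≤ q (x - a) + q (a - b) + q (b - y) := by
        grw [map_add_le_add q, map_add_le_add q]
    _ ≤ r + B + r := by rw [map_sub_rev q x a]; gcongr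

theorem exists_nondiametral_mem_convexHull
    (hnet : ∀ δ > 0, ∃ t : Finset E, ↑t ⊆ M ∧ ∀ y ∈ M, ∃ a ∈ t, q (a - y) ≤ δ)
    {x₀ y₀ : E} (hx₀ : x₀ ∈ M) (hy₀ : y₀ ∈ M) (hne : q (x₀ - y₀) ≠ 0) :
    ∃ u ∈ convexHull ℝ M, ∃ r, (∀ y ∈ M, q (u - y) ≤ r) ∧ ∃ x ∈ M, ∃ y ∈ M, r < q (x - y) := by
  let dists : Set ℝ := (fun z : E × E ↦ q (z.1 - z.2)) '' M ×ˢ M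
  have hbdd : BddAbove dists :=
    let ⟨_, _, ht⟩ := hnet 1 one_pos
    bddAbove_seminorm_sub_of_net ht
  have hle_sSup (x y : E) (hx : x ∈ M) (hy : y ∈ M) : q (x - y) ≤ sSup dists :=
    le_csSup hbdd ⟨(x, y), ⟨hx, hy⟩, rfl⟩
  have hpos : 0 < sSup dists :=
    (lt_of_le_of_ne' (apply_nonneg q _) hne).trans_le (hle_sSup x₀ y₀ hx₀ hy₀)
  obtain ⟨t, htM, ht⟩ := hnet (sSup dists / 2) (half_pos hpos)
  have htne : t.Nonempty := let ⟨a, ha, _⟩ := ht x₀ hx₀; ⟨a, ha⟩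
  obtain ⟨u, hu, r, hr, hur⟩ := exists_mem_convexHull_forall_seminorm_sub_le htne
    (half_lt_self hpos) ht fun a ha y hy ↦ hle_sSup a y (htM ha) hy
  obtain ⟨_, ⟨⟨x, y⟩, ⟨hx, hy⟩, rfl⟩, hxy⟩ :=
    exists_lt_of_lt_csSup ⟨_, mem_image_of_mem _ (mk_mem_prod hx₀ hy₀)⟩ hr
  exact ⟨u, convexHull_mono htM hu, r, hur, x, hx, y, hy, hxy⟩

end NormalStructure

section FixedPoint

variable {S E : Type*} [TopologicalSpace E] {T : S → E → E} {K M : Set E}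

theorem isMinimalSystem_restrict
    (hM : Minimal (fun C ↦ IsCompact C ∧ C.Nonempty ∧ ∀ s, MapsTo (T s) C C) M) :
    IsMinimalSystem fun s ↦ (hM.prop.2.2 s).restrict := by
  intro F hF hFne hTF
  have := isCompact_iff_compactSpace.1 hM.prop.1
  have himage : Subtype.val '' F = M := by
    refine hM.eq_of_subset ⟨hF.isCompact.image continuous_subtype_val, hFne.image _, fun s ↦ ?_⟩
      (Subtype.coe_image_subset M F)
    rintro _ ⟨x, hx, rfl⟩
    exact ⟨_, hTF s hx, rfl⟩
  rw [← image_val_injective.eq_iff, himage]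
  simp

theorem exists_minimal_isCompact [T2Space E] {P : Set E → Prop}
    (hP : ∀ 𝒞 : Set (Set E), (∀ C ∈ 𝒞, P C) → P (⋂₀ 𝒞)) (hK : IsCompact K) (hKne : K.Nonempty)
    (hPK : P K) : ∃ M ⊆ K, Minimal (fun C ↦ IsCompact C ∧ C.Nonempty ∧ P C) M := by
  refine zorn_superset_nonempty {C | IsCompact C ∧ C.Nonempty ∧ P C} ?_ K ⟨hK, hKne, hPK⟩
  intro 𝒞 h𝒞 hchain hne
  have hclosed (C : Set E) (hC : C ∈ 𝒞) : IsClosed C := (h𝒞 hC).1.isClosed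
  have hdir : DirectedOn (· ⊇ ·) 𝒞 := fun C hC D hD ↦ (hchain.total hC hD).elim
    (fun hCD ↦ ⟨C, hC, subset_rfl, hCD⟩) fun hDC ↦ ⟨D, hD, hDC, subset_rfl⟩
  have := hne.to_subtype
  refine ⟨⋂₀ 𝒞, ⟨?_, ?_, hP 𝒞 fun C hC ↦ (h𝒞 hC).2.2⟩, fun C hC ↦ sInter_subset_of_mem hC⟩
  · obtain ⟨C, hC⟩ := hne
    exact (h𝒞 hC).1.of_isClosed_subset (isClosed_sInter hclosed) (sInter_subset_of_mem hC)
  · exact IsCompact.nonempty_sInter_of_directed_nonempty_isCompact_isClosed hdir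
      (fun C hC ↦ (h𝒞 hC).2.1) (fun C hC ↦ (h𝒞 hC).1) hclosed

variable [AddCommGroup E] [Module ℝ E] {q : Seminorm ℝ E}

theorem forall_seminorm_sub_le_of_minimal {r : ℝ}
    (hK : Minimal (fun C ↦ IsCompact C ∧ C.Nonempty ∧ Convex ℝ C ∧ ∀ s, MapsTo (T s) C C) K)
    (hq : IsClosed {z : E × E | q (z.1 - z.2) ≤ r})
    (hTq : ∀ s, ∀ x ∈ K, ∀ y ∈ K, q (T s x - T s y) ≤ q (x - y))
    (hMK : M ⊆ K) (hTM : ∀ s, SurjOn (T s) M M) {u : E} (hu : u ∈ K)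
    (hur : ∀ y ∈ M, q (u - y) ≤ r) : ∀ x ∈ K, ∀ y ∈ M, q (x - y) ≤ r := by
  obtain ⟨hKcpt, -, hKcv, hTK⟩ := hK.prop
  have hclosed (y : E) : IsClosed (q.closedBall y r) :=
    hq.preimage (continuous_id.prodMk continuous_const)
  have hsub : K ⊆ K ∩ ⋂ y ∈ M, q.closedBall y r := by
    refine hK.le_of_le ⟨?_, ⟨u, hu, mem_iInter₂.2 hur⟩, ?_, fun s x hx ↦ ⟨hTK s hx.1, ?_⟩⟩
      inter_subset_left
    · exact hKcpt.inter_right (isClosed_biInter fun y _ ↦ hclosed y)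
    · exact hKcv.inter (convex_iInter₂ fun y _ ↦ q.convex_closedBall y r)
    · refine mem_iInter₂.2 fun y hy ↦ ?_
      obtain ⟨y', hy', rfl⟩ := hTM s hy
      exact (hTq s x hx.1 y' (hMK hy')).trans (mem_iInter₂.1 hx.2 y' hy')
  exact fun x hx y hy ↦ mem_iInter₂.1 (hsub hx).2 y hy

variable [MeasurableSpace E] [BorelSpace E]

theorem exists_finset_forall_seminorm_sub_le {δ : ℝ} (hδ : 0 < δ)
    (hM : Minimal (fun C ↦ IsCompact C ∧ C.Nonempty ∧ ∀ s, MapsTo (T s) C C) M)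
    (hcont : ∀ s, ContinuousOn (T s) M) {ν : Measure M} [ν.OuterRegular] [IsFiniteMeasure ν]
    [NeZero ν] (hν : ∀ s, MeasurePreserving (hM.prop.2.2 s).restrict ν ν)
    (hq : IsClosed {z : E × E | q (z.1 - z.2) ≤ δ / 2})
    (hTq : ∀ s, ∀ x ∈ M, ∀ y ∈ M, q (T s x - T s y) ≤ q (x - y)) {U : Set M} (hU : IsOpen U)
    (hUne : U.Nonempty) (hUq : ∀ x ∈ U, ∀ y ∈ U, q ((x : E) - y) ≤ δ / 2) :
    ∃ t : Finset E, ↑t ⊆ M ∧ ∀ y ∈ M, ∃ a ∈ t, q (a - y) ≤ δ := by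
  have := isCompact_iff_compactSpace.1 hM.prop.1
  let R : SetRel M M := {z | q ((z.1 : E) - z.2) ≤ δ / 2}
  have : R.IsRefl := ⟨fun x ↦ by simpa [R] using (half_pos hδ).le⟩
  have : R.IsSymm := ⟨fun x y hxy ↦ (map_sub_rev q _ _).trans_le hxy⟩
  have hR : IsClosed R := hq.preimage (continuous_subtype_val.prodMap continuous_subtype_val)
  obtain ⟨N, hN, hcover⟩ := (isMinimalSystem_restrict hM).exists_finite_isCover_comp
    (fun s ↦ (hcont s).mapsToRestrict (hM.prop.2.2 s)) hν hR
    (fun s z hz ↦ (hTq s z.1 z.1.2 z.2 z.2.2).trans hz) hU hUne fun z hz ↦ hUq z.1 hz.1 z.2 hz.2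
  refine ⟨(hN.image Subtype.val).toFinset, by simp, fun y hy ↦ ?_⟩
  obtain ⟨a, haN, b, hyb, hba⟩ := hcover (mem_univ ⟨y, hy⟩)
  refine ⟨a, by simpa using haN, ?_⟩
  rw [map_sub_rev]
  calc q (y - a) ≤ q (y - b) + q ((b : E) - a) := le_map_sub_add_map_sub ..
    _ ≤ δ / 2 + δ / 2 := add_le_add hyb hba
    _ = δ := add_halves δ

variable [T2Space E]

theorem seminorm_sub_eq_zero_of_minimal
    (hK : Minimal (fun C ↦ IsCompact C ∧ C.Nonempty ∧ Convex ℝ C ∧ ∀ s, MapsTo (T s) C C) K)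
    (hM : Minimal (fun C ↦ IsCompact C ∧ C.Nonempty ∧ ∀ s, MapsTo (T s) C C) M) (hMK : M ⊆ K)
    (hcont : ∀ s, ContinuousOn (T s) M) {ν : Measure M} [ν.OuterRegular] [IsFiniteMeasure ν]
    [NeZero ν] (hν : ∀ s, MeasurePreserving (hM.prop.2.2 s).restrict ν ν)
    (hq : ∀ r, IsClosed {z : E × E | q (z.1 - z.2) ≤ r})
    (hTq : ∀ s, ∀ x ∈ K, ∀ y ∈ K, q (T s x - T s y) ≤ q (x - y))
    (hfrag : ∀ δ > 0, ∃ U : Set M, IsOpen U ∧ U.Nonempty ∧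
      ∀ x ∈ U, ∀ y ∈ U, q ((x : E) - y) ≤ δ) :
    ∀ x ∈ M, ∀ y ∈ M, q (x - y) = 0 := by
  have := isCompact_iff_compactSpace.1 hM.prop.1
  have hsurj (s : S) : SurjOn (T s) M M :=
    (hM.prop.2.2 s).restrict_surjective_iff.1 <| (isMinimalSystem_restrict hM).surjective
      (fun s ↦ (hcont s).mapsToRestrict (hM.prop.2.2 s)) hν s
  intro x₀ hx₀ y₀ hy₀
  by_contra hne
  have hnet (δ : ℝ) (hδ : δ > 0) : ∃ t : Finset E, ↑t ⊆ M ∧ ∀ y ∈ M, ∃ a ∈ t, q (a - y) ≤ δ :=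
    let ⟨_, hU, hUne, hUq⟩ := hfrag (δ / 2) (half_pos hδ)
    exists_finset_forall_seminorm_sub_le hδ hM hcont hν (hq _)
      (fun s x hx y hy ↦ hTq s x (hMK hx) y (hMK hy)) hU hUne hUq
  obtain ⟨u, hu, r, hur, x, hx, y, hy, hr⟩ := exists_nondiametral_mem_convexHull hnet hx₀ hy₀ hne
  have huK : u ∈ K := convexHull_min hMK hK.prop.2.2.1 hu
  exact hr.not_ge <|
    forall_seminorm_sub_le_of_minimal hK (hq r) hTq hMK hsurj huK hur x (hMK hx) y hy

theorem exists_fixedPoint_of_forall_measurePreserving {ι : Type*} {Q : SeminormFamily ℝ E ι}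
    (hsep : ∀ x, (∀ i, Q i x = 0) → x = 0)
    (hclosed : ∀ i r, IsClosed {z : E × E | Q i (z.1 - z.2) ≤ r})
    (hfrag : ∀ i, ∀ δ > 0, ∀ M : Set E, IsCompact M → M.Nonempty →
      ∃ U : Set M, IsOpen U ∧ U.Nonempty ∧ ∀ x ∈ U, ∀ y ∈ U, Q i ((x : E) - y) ≤ δ)
    (hK : IsCompact K) (hKne : K.Nonempty) (hKcv : Convex ℝ K) (hTK : ∀ s, MapsTo (T s) K K)
    (hcont : ∀ s, ContinuousOn (T s) K)
    (hTQ : ∀ i s, ∀ x ∈ K, ∀ y ∈ K, Q i (T s x - T s y) ≤ Q i (x - y))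
    (hmeas : ∀ M : Set E, IsCompact M → M.Nonempty → M ⊆ K → ∀ hTM : ∀ s, MapsTo (T s) M M,
      ∃ ν : Measure M, ν.Regular ∧ IsProbabilityMeasure ν ∧
        ∀ s, MeasurePreserving (hTM s).restrict ν ν) :
    ∃ x ∈ K, ∀ s, T s x = x := by
  have hmapsTo (𝒞 : Set (Set E)) (h𝒞 : ∀ C ∈ 𝒞, ∀ s, MapsTo (T s) C C) (s : S) :
      MapsTo (T s) (⋂₀ 𝒞) (⋂₀ 𝒞) := fun x hx C hC ↦ h𝒞 C hC s (hx C hC)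
  obtain ⟨K₀, hK₀K, hK₀⟩ := exists_minimal_isCompact
    (P := fun C ↦ Convex ℝ C ∧ ∀ s, MapsTo (T s) C C)
    (fun 𝒞 h𝒞 ↦ ⟨convex_sInter fun C hC ↦ (h𝒞 C hC).1, hmapsTo 𝒞 fun C hC ↦ (h𝒞 C hC).2⟩)
    hK hKne ⟨hKcv, hTK⟩
  obtain ⟨hK₀cpt, hK₀ne, -, hTK₀⟩ := hK₀.prop
  obtain ⟨M, hMK₀, hM⟩ := exists_minimal_isCompact hmapsTo hK₀cpt hK₀ne hTK₀
  obtain ⟨hMcpt, ⟨x, hx⟩, hTM⟩ := hM.prop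
  obtain ⟨ν, hreg, hprob, hν⟩ := hmeas M hMcpt ⟨x, hx⟩ (hMK₀.trans hK₀K) hTM
  refine ⟨x, hK₀K (hMK₀ hx), fun s ↦ sub_eq_zero.1 (hsep _ fun i ↦ ?_)⟩
  exact seminorm_sub_eq_zero_of_minimal hK₀ hM hMK₀
    (fun s ↦ (hcont s).mono (hMK₀.trans hK₀K)) hν (hclosed i)
    (fun s x hx y hy ↦ hTQ i s x (hK₀K hx) y (hK₀K hy))
    (fun δ hδ ↦ hfrag i δ hδ M hMcpt ⟨x, hx⟩) _ (hTM s hx) x hx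

end FixedPoint

theorem fixedPoint_of_LIM_subspace_general {S : Type*} [Mul S] {X : Type*} [AddCommGroup X]
    [Module ℝ X] [TopologicalSpace X] [T2Space X] {ι : Type*} {Q : SeminormFamily ℝ X ι}
    (hQ : WithSeminorms Q) {K : Set X} {π : S → X → X} (hKne : K.Nonempty) (hKcv : Convex ℝ K)
    (hKcpt : @IsCompact X (weakTop ℝ X) K) (hinv : ∀ s, MapsTo (π s) K K)
    (hact : ∀ s t, ∀ x ∈ K, π (s * t) x = π s (π t x))
    (htra : ∀ s, @ContinuousOn X X (weakTop ℝ X) (weakTop ℝ X) (π s) K)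
    (hne : ∀ i s, ∀ x ∈ K, ∀ y ∈ K, Q i (π s x - π s y) ≤ Q i (x - y)) {Y : Set (ellInfty S)}
    (hfy : ∀ y ∈ K, ∀ f : X → ℂ, @ContinuousOn X ℂ (weakTop ℝ X) _ f K →
      ∃ h : ellInfty S, (∀ s, h s = f (π s y)) ∧ h ∈ Y)
    {μ : ellInfty S →L[ℂ] ℂ} (hμ : ‖μ‖ ≤ 1) (hone : μ 1 = 1)
    (hLIM : ∀ f ∈ Y, ∀ s, ∀ g : ellInfty S, (∀ t, g t = f (s * t)) → μ g = μ f) :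
    ∃ x ∈ K, ∀ s, π s x = x := by
  have := hQ.topologicalAddGroup
  have := hQ.continuousSMul
  have := hQ.toLocallyConvexSpace
  -- `WeakSpace ℝ X` is a synonym of `X`, so the data on `X` below is data on it by unfolding.
  rw [weakTop_eq_weakSpace] at hKcpt htra hfy
  borelize (WeakSpace ℝ X)
  exact exists_fixedPoint_of_forall_measurePreserving (E := WeakSpace ℝ X) (Q := Q)
    (fun x hx ↦ by_contra fun hx0 ↦ let ⟨i, hi⟩ := hQ.separating_of_T1 x hx0; hi (hx i))
    (fun i ↦ isClosed_toWeakSpace_symm_seminorm_sub_le (hQ.continuous_seminorm i))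
    (fun i δ hδ M ↦ exists_isOpen_weakSpace_seminorm_sub_le (hQ.continuous_seminorm i) hδ)
    hKcpt hKne hKcv hinv htra hne
    (fun M ↦ exists_regular_measurePreserving_restrict (E := WeakSpace ℝ X) hKcpt htra hact hfy
      hμ hone hLIM)

/-- **Theorem (Main)**: Let `(S,(K,weak))` be a `Q`-nonexpansive dynamical system, `K` a weakly
compact convex subset of a Hausdorff locally convex space whose topology is generated by the
seminorm family `Q`, and let `Y` be a closed linear subspace of `ℓ∞(S)` containing constants and
invariant under left and right translations, such that `s ↦ f (π s y)` belongs to `Y` for every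
`y ∈ K` and every weakly continuous `f : K → ℂ`.  If `Y` has a left invariant mean, then
`(S,(K,weak))` has a common fixed point. -/
theorem fixedPoint_of_LIM_subspace
    {S : Type u} [Semigroup S] [TopologicalSpace S] [T2Space S]
    (hS : IsSemitopologicalSemigroup S)
    {X : Type v} [AddCommGroup X] [Module ℝ X] [TopologicalSpace X] [T2Space X]
    {ι : Type v} [Nonempty ι] (Q : SeminormFamily ℝ X ι) (hQ : WithSeminorms Q)
    (K : Set X) (π : S → X → X)
    -- `K` is a nonempty weakly compact convex set
    (hKne : K.Nonempty) (hKcv : Convex ℝ K) (hKcpt : @IsCompact X (weakTop ℝ X) K)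
    -- `(S,(K,weak))` is a dynamical system
    (hinv : ∀ s : S, MapsTo (π s) K K)
    (hact : ∀ s t : S, ∀ x ∈ K, π (s * t) x = π s (π t x))
    (horb : ∀ x ∈ K, @Continuous S X _ (weakTop ℝ X) fun s => π s x)
    (htra : ∀ s : S, @ContinuousOn X X (weakTop ℝ X) (weakTop ℝ X) (π s) K)
    -- the system is `Q`-nonexpansive
    (hne : ∀ (i : ι) (s : S), ∀ x ∈ K, ∀ y ∈ K, Q i (π s x - π s y) ≤ Q i (x - y))
    -- `Y` is a closed linear subspace of `ℓ∞(S)`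
    (Y : Submodule ℂ (ellInfty S)) (hYcl : IsClosed (Y : Set (ellInfty S)))
    -- `Y` contains the constants
    (e : ellInfty S) (he : ∀ s : S, e s = 1) (heY : e ∈ Y)
    -- `Y` is invariant under left and right translations
    (hYL : ∀ f ∈ Y, ∀ s : S, ∀ g : ellInfty S, (∀ t : S, g t = f (s * t)) → g ∈ Y)
    (hYR : ∀ f ∈ Y, ∀ s : S, ∀ g : ellInfty S, (∀ t : S, g t = f (t * s)) → g ∈ Y)
    -- `f_y ∈ Y` for every `y ∈ K` and every weakly continuous `f : K → ℂ`
    (hfy : ∀ y ∈ K, ∀ f : X → ℂ, @ContinuousOn X ℂ (weakTop ℝ X) _ f K →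
      ∃ h : ellInfty S, (∀ s : S, h s = f (π s y)) ∧ h ∈ Y)
    -- `Y` has a left invariant mean
    (μ : ellInfty S →L[ℂ] ℂ) (hnorm : ‖μ‖ = 1) (hone : μ e = 1)
    (hLIM : ∀ f, f ∈ Y → ∀ s : S, ∀ g : ellInfty S, (∀ t : S, g t = f (s * t)) → μ g = μ f) :
    ∃ x ∈ K, ∀ s : S, π s x = x := by
  obtain rfl : e = 1 := by ext s; exact he s
  exact fixedPoint_of_LIM_subspace_general hQ hKne hKcv hKcpt hinv hact htra hne (Y := Y) hfy
    hnorm.le hone hLIM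
end
end

section
/- Let S be a semitopological semigroup. If LUC(S) has a left invariant mean, then S has property (G*): every Q-nonexpansive dynamical system (S,(K,weak)), where K is a weakly compact convex subset of a Hausdorff locally convex space whose topology is determined by a family Q of seminorms and the action S × K → K is jointly continuous when K carries the weak topology, has a point x ∈ K with sx = x for all s ∈ S. -/
open Set MeasureTheory BoundedContinuousFunction

noncomputable section

universe u v

section CbDefs

variable (S : Type u) [Semigroup S] [TopologicalSpace S]

/-- `g` is the family of left translates of `f`: `g s = L_s f` where `L_s f (t) = f (s * t)`. -/
def IsLTranslates (f : S →ᵇ ℂ) (g : S → S →ᵇ ℂ) : Prop :=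
  ∀ s t, g s t = f (s * t)

/-- `LUC(S)`: bounded continuous `f` such that `s ↦ L_s f` is norm continuous. -/
def LUCset : Set (S →ᵇ ℂ) :=
  {f | ∃ g, IsLTranslates S f g ∧ Continuous g}

/-- `AP(S)`: bounded continuous `f` whose set of left translates is relatively compact in the
norm topology of `C(S)`. -/
def APset : Set (S →ᵇ ℂ) :=
  {f | ∃ g, IsLTranslates S f g ∧ IsCompact (closure (Set.range g))}

/-- `WAP(S)`: bounded continuous `f` whose set of left translates is relatively compact in the
weak topology of `C(S)`. -/
def WAPset : Set (S →ᵇ ℂ) :=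
  {f | ∃ g, IsLTranslates S f g ∧
    @IsCompact _ (weakTop ℂ (S →ᵇ ℂ)) (@closure _ (weakTop ℂ (S →ᵇ ℂ)) (Set.range g))}

/-- The topology on `C(S)` induced by the multiplicative means. -/
def lmcTop : TopologicalSpace (S →ᵇ ℂ) :=
  ⨅ μ : {μ : (S →ᵇ ℂ) →L[ℂ] ℂ // ‖μ‖ = 1 ∧ μ 1 = 1 ∧ ∀ f g, μ (f * g) = μ f * μ g},
    TopologicalSpace.induced (⇑μ.1) inferInstance

/-- `LMC(S)`: bounded continuous `f` such that `s ↦ L_s f` is continuous into `C(S)` with the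
topology induced by the multiplicative means. -/
def LMCset : Set (S →ᵇ ℂ) :=
  {f | ∃ g, IsLTranslates S f g ∧ @Continuous _ _ _ (lmcTop S) g}

/-- `Y ⊆ C(S)` has a left invariant mean: there is a norm-one functional `μ` on `C(S)` with
`μ 1 = 1` and `μ (L_s f) = μ f` for all `f ∈ Y` and `s ∈ S`.  (By the Hahn–Banach extension
theorem this is equivalent to the existence of a left invariant mean on the subspace `Y`.) -/
def HasLIM (Y : Set (S →ᵇ ℂ)) : Prop :=
  ∃ μ : (S →ᵇ ℂ) →L[ℂ] ℂ, ‖μ‖ = 1 ∧ μ 1 = 1 ∧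
    ∀ f ∈ Y, ∀ g : S → S →ᵇ ℂ, IsLTranslates S f g → ∀ s, μ (g s) = μ f

end CbDefs

/-- Property (G*): every `Q`-nonexpansive, jointly weakly continuous dynamical system
`(S,(K,weak))` on a nonempty weakly compact convex subset of a Hausdorff locally convex space
has a common fixed point. -/
def PropertyGStar (S : Type u) [Semigroup S] [TopologicalSpace S] : Prop :=
  ∀ (X : Type v) [AddCommGroup X] [Module ℝ X] [TopologicalSpace X] [T2Space X]
    (ι : Type v) [Nonempty ι] (Q : SeminormFamily ℝ X ι), WithSeminorms Q →
    ∀ (K : Set X) (π : S → X → X),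
      K.Nonempty → Convex ℝ K → @IsCompact X (weakTop ℝ X) K →
      (∀ s : S, MapsTo (π s) K K) →
      (∀ s t : S, ∀ x ∈ K, π (s * t) x = π s (π t x)) →
      -- the action is jointly continuous when `K` carries the weak topology
      (@ContinuousOn (S × X) X (@instTopologicalSpaceProd S X _ (weakTop ℝ X)) (weakTop ℝ X)
        (fun q => π q.1 q.2) (Set.univ ×ˢ K)) →
      -- the action is `Q`-nonexpansive
      (∀ (i : ι) (s : S), ∀ x ∈ K, ∀ y ∈ K, Q i (π s x - π s y) ≤ Q i (x - y)) →
      ∃ x ∈ K, ∀ s : S, π s x = x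

open Filter Topology CompactlySupported

/-!
Let `K` be a minimal nonempty weakly compact convex invariant set. Integrating a left invariant
mean along an orbit in `K` gives an invariant regular probability measure `m` on `K`: joint weak
continuity of the action is exactly what puts the functions `s ↦ f (s • y)` in `LUC(S)`.

For a continuous seminorm `p` which the action does not expand, `Ψ x = ∫ p (x - y) ^ 2 ∂m(y)` is
convex, weakly lower semicontinuous and nonincreasing along orbits, so its sublevel sets are
invariant and minimality makes it constant on `K`. By the parallelogram-type inequality at
midpoints, `p (x - ·)` and `p (z - ·)` then agree `m`-almost everywhere for all `x z ∈ K`.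

An inner regular measure for the weak topology charges `p`-balls of arbitrarily small radius, also
inside any given set of positive measure. (Otherwise one can pick points successively so that they
stay `p`-far from the convex hull of their predecessors, within a decreasing sequence of weakly
compact sets; a weak cluster point contradicts Mazur's theorem.) If `{y | c < p (x - y)}` had
positive measure, so would its part within `p`-distance `c` of some `z ∈ K`, contradicting the
almost everywhere equality. So `p (x - ·) = 0` almost everywhere for every `x ∈ K`, hence `p`
vanishes on `K - K`; as such seminorms separate points, `K` is a single point.
-/

section WeakSpace

variable {X : Type*} [AddCommGroup X] [Module ℝ X] [TopologicalSpace X]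

theorem weakTop_eq_instTopologicalSpace_weakSpace :
    weakTop ℝ X = (inferInstance : TopologicalSpace (WeakSpace ℝ X)) := by
  have : (inferInstance : TopologicalSpace (WeakSpace ℝ X)) =
      .induced (fun x (f : X →L[ℝ] ℝ) => f x) Pi.topologicalSpace := rfl
  rw [this, weakTop, Pi.topologicalSpace, induced_iInf]
  simp only [induced_compose, Function.comp_def]
  rfl

variable [IsTopologicalAddGroup X] [ContinuousSMul ℝ X] [LocallyConvexSpace ℝ X]

theorem image_toWeakSpace_closure_preimage {D : Set (WeakSpace ℝ X)} (hD : Convex ℝ D) :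
    toWeakSpace ℝ X '' closure (toWeakSpace ℝ X ⁻¹' D) = closure D := by
  have := (hD.linear_preimage (toWeakSpace ℝ X).toLinearMap).toWeakSpace_closure ℝ
  rwa [LinearEquiv.coe_coe, image_preimage_eq _ (toWeakSpace ℝ X).surjective] at this

theorem lowerSemicontinuous_of_continuous_comp_toWeakSpace {f : WeakSpace ℝ X → ℝ}
    (hf : QuasiconvexOn ℝ univ f) (hf_cont : Continuous (f ∘ toWeakSpace ℝ X)) :
    LowerSemicontinuous f := by
  refine lowerSemicontinuous_iff_isClosed_preimage.2 fun r => ?_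
  have convex_sublevel : Convex ℝ (f ⁻¹' Iic r) := by simpa using! hf r
  have isClosed_preimage : IsClosed (toWeakSpace ℝ X ⁻¹' (f ⁻¹' Iic r)) :=
    isClosed_Iic.preimage hf_cont
  rw [← closure_subset_iff_isClosed, ← image_toWeakSpace_closure_preimage convex_sublevel,
    isClosed_preimage.closure_eq]
  exact image_preimage_subset _ _

theorem lowerSemicontinuous_seminorm_of_continuous_comp_toWeakSpace
    {p : Seminorm ℝ (WeakSpace ℝ X)} (hp : Continuous (p ∘ toWeakSpace ℝ X)) :
    LowerSemicontinuous p :=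
  lowerSemicontinuous_of_continuous_comp_toWeakSpace p.convexOn.quasiconvexOn hp

theorem exists_mem_seminorm_sub_lt_of_mem_closure_weakSpace {p : Seminorm ℝ (WeakSpace ℝ X)}
    (hp : Continuous (p ∘ toWeakSpace ℝ X)) {D : Set (WeakSpace ℝ X)} (hD : Convex ℝ D)
    {w : WeakSpace ℝ X} (hw : w ∈ closure D) {ε : ℝ} (hε : 0 < ε) : ∃ z ∈ D, p (z - w) < ε := by
  obtain ⟨x, hx, rfl⟩ := image_toWeakSpace_closure_preimage hD ▸ hw
  have isOpen_ball : IsOpen {z | p (toWeakSpace ℝ X (z - x)) < ε} :=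
    isOpen_lt (hp.comp (continuous_sub_right x)) continuous_const
  obtain ⟨z, hz, hzD⟩ := mem_closure_iff.1 hx _ isOpen_ball (by simpa using hε)
  exact ⟨toWeakSpace ℝ X z, hzD, by simpa using hz⟩

end WeakSpace

section Boundedness

theorem exists_eventually_nhdsWithin_le_of_isCompact {E : Type*} [TopologicalSpace E] [R1Space E]
    {K : Set E} (hK : IsCompact K) (hK_ne : K.Nonempty) {f : E → ℝ} (hf : LowerSemicontinuous f) :
    ∃ x ∈ K, ∃ n : ℕ, ∀ᶠ y in 𝓝[K] x, f y ≤ n := by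
  have : CompactSpace K := isCompact_iff_compactSpace.1 hK
  have : Nonempty K := hK_ne.to_subtype
  obtain ⟨n, x, hx⟩ : ∃ n : ℕ, (interior {y : K | f y ≤ n}).Nonempty := by
    refine nonempty_interior_of_iUnion_of_closed (fun n => ?_) ?_
    · exact (hf.isClosed_preimage n).preimage continuous_subtype_val
    · exact eq_univ_of_forall fun y => mem_iUnion.2 (exists_nat_ge (f y))
  refine ⟨x, x.2, n, ?_⟩
  rw [← map_nhds_subtype_val]
  exact mem_interior_iff_mem_nhds.1 hx

theorem bddAbove_seminorm_image_of_isCompact {E : Type*} [AddCommGroup E] [Module ℝ E]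
    [TopologicalSpace E] [IsTopologicalAddGroup E] [ContinuousSMul ℝ E] {K : Set E}
    (hK : IsCompact K) (hK_conv : Convex ℝ K) {p : Seminorm ℝ E} (hp : LowerSemicontinuous p) :
    BddAbove (p '' K) := by
  rcases K.eq_empty_or_nonempty with rfl | hK_ne
  · simp
  obtain ⟨x, hxK, n, hn⟩ := exists_eventually_nhdsWithin_le_of_isCompact hK hK_ne hp
  -- By compactness one contraction towards `x` moves all of `K` into the region where `p ≤ n`.
  have eventually_contraction : ∀ᶠ t : ℝ in 𝓝 0, ∀ y ∈ K, x + t • (y - x) ∈ K →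
      p (x + t • (y - x)) ≤ n := by
    refine hK.eventually_forall_of_forall_eventually fun y _ => ?_
    have contraction_tendsto :
        Tendsto (fun z : ℝ × E => x + z.1 • (z.2 - x)) (𝓝 (0, y)) (𝓝 x) :=
      Continuous.tendsto' (by fun_prop) _ _ (by simp)
    exact contraction_tendsto.eventually (eventually_nhdsWithin_iff.1 hn)
  obtain ⟨t, ht, ht_pos, ht_le⟩ := ((eventually_contraction.filter_mono nhdsWithin_le_nhds).and
    (Ioc_mem_nhdsGT zero_lt_one)).exists
  refine ⟨(n + p x) / t + p x, ?_⟩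
  rintro _ ⟨y, hy, rfl⟩
  have scaled_le : t * p (y - x) ≤ n + p x :=
    calc t * p (y - x) = p (t • (y - x)) := by
          rw [map_smul_eq_mul, Real.norm_of_nonneg ht_pos.le]
      _ = p ((x + t • (y - x)) - x) := by rw [add_sub_cancel_left]
      _ ≤ p (x + t • (y - x)) + p x := map_sub_le_add p _ _
      _ ≤ n + p x := by
          gcongr
          exact ht y hy (hK_conv.add_smul_sub_mem hxK hy ⟨ht_pos.le, ht_le⟩)
  calc p y = p ((y - x) + x) := by rw [sub_add_cancel]
    _ ≤ p (y - x) + p x := map_add_le_add p _ _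
    _ ≤ (n + p x) / t + p x := by
        gcongr
        rwa [le_div_iff₀' ht_pos]

end Boundedness

section InvariantMeasure

variable {S Y : Type*} [TopologicalSpace S]

theorem re_apply_nonneg_of_norm_le_one {μ : (S →ᵇ ℂ) →L[ℂ] ℂ} (hμ : ‖μ‖ ≤ 1) (hμ_one : μ 1 = 1)
    {f : S →ᵇ ℝ} (hf : 0 ≤ f) :
    0 ≤ (μ (Complex.ofRealCLM.compLeftContinuousBounded S f)).re := by
  set F := Complex.ofRealCLM.compLeftContinuousBounded S f
  have norm_sub_le : ‖(‖f‖ : ℂ) • (1 : S →ᵇ ℂ) - F‖ ≤ ‖f‖ := by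
    refine (norm_le (norm_nonneg f)).2 fun s => ?_
    have hs : ((‖f‖ : ℂ) • (1 : S →ᵇ ℂ) - F) s = ((‖f‖ - f s : ℝ) : ℂ) := by simp [F]
    rw [hs, Complex.norm_of_nonneg (sub_nonneg.2 (f.apply_le_norm s))]
    linarith [show 0 ≤ f s from hf s]
  have : ‖f‖ - (μ F).re ≤ ‖f‖ :=
    calc ‖f‖ - (μ F).re = (μ ((‖f‖ : ℂ) • (1 : S →ᵇ ℂ) - F)).re := by simp [hμ_one]
      _ ≤ ‖μ ((‖f‖ : ℂ) • (1 : S →ᵇ ℂ) - F)‖ := Complex.re_le_norm _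
      _ ≤ 1 * ‖f‖ := μ.le_of_opNorm_le_of_le hμ norm_sub_le
      _ = ‖f‖ := one_mul _
  linarith

variable [TopologicalSpace Y] [CompactSpace Y]

/-- The pullback `f ↦ f ∘ g` of real continuous functions on a compact space along `g`, viewed in
the complex-valued bounded continuous functions, on which means are defined here. -/
def complexPullback (g : C(S, Y)) : C(Y, ℝ) →ₗ[ℝ] S →ᵇ ℂ where
  toFun f := Complex.ofRealCLM.compLeftContinuousBounded S ((mkOfCompact f).compContinuous g)
  map_add' f₁ f₂ := by ext; simp
  map_smul' c f := by ext; simp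

@[simp]
theorem complexPullback_apply (g : C(S, Y)) (f : C(Y, ℝ)) (s : S) :
    complexPullback g f s = f (g s) := rfl

theorem continuous_complexPullback (g : C(S, Y)) : Continuous (complexPullback g) :=
  (Complex.ofRealCLM.compLeftContinuousBounded S).continuous.comp <|
    (continuous_compContinuous g).comp (ContinuousMap.isometryEquivBoundedOfCompact Y ℝ).continuous

theorem exists_regular_integral_eq_re_apply_complexPullback [T2Space Y] [MeasurableSpace Y]
    [BorelSpace Y] {μ : (S →ᵇ ℂ) →L[ℂ] ℂ} (hμ : ‖μ‖ ≤ 1) (hμ_one : μ 1 = 1) (g : C(S, Y)) :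
    ∃ m : Measure Y, IsProbabilityMeasure m ∧ m.Regular ∧
      ∀ f : C(Y, ℝ), ∫ y, f y ∂m = (μ (complexPullback g f)).re := by
  let Λ : C_c(Y, ℝ) →ₚ[ℝ] ℝ := PositiveLinearMap.mk₀
    { toFun f := (μ (complexPullback g f)).re
      map_add' f₁ f₂ := by
        rw [← Complex.add_re, ← map_add, ← map_add]; rfl
      map_smul' c f := by
        have : complexPullback g ↑(c • f) = (c : ℂ) • complexPullback g ↑f := by ext; simp
        simp [this] }
    fun f hf => re_apply_nonneg_of_norm_le_one hμ hμ_one fun s => hf (g s)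
  have integral_eq (f : C(Y, ℝ)) :
      ∫ y, f y ∂(RealRMK.rieszMeasure Λ) = (μ (complexPullback g f)).re :=
    RealRMK.integral_rieszMeasure Λ ⟨f, .of_compactSpace _⟩
  refine ⟨RealRMK.rieszMeasure Λ, ⟨?_⟩, inferInstance, integral_eq⟩
  have pullback_one : complexPullback g 1 = 1 := by ext; simp
  simpa [pullback_one, hμ_one, measureReal_def, ENNReal.toReal_eq_one_iff] using integral_eq 1

variable [Semigroup S] [SemigroupAction S Y] [ContinuousSMul S Y]

variable (S) in
/-- The orbit map `s ↦ s • y` of a point, through which a mean on `S` becomes a measure on `Y`. -/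
def orbitMap (y : Y) : C(S, Y) := ⟨(· • y), by fun_prop⟩

theorem isLTranslates_complexPullback_orbitMap (y : Y) (f : C(Y, ℝ)) :
    IsLTranslates S (complexPullback (orbitMap S y) f)
      fun s => complexPullback (orbitMap S y) (f.comp ⟨(s • ·), by fun_prop⟩) := by
  intro s t
  simp [orbitMap, mul_smul]

theorem complexPullback_orbitMap_mem_LUCset (y : Y) (f : C(Y, ℝ)) :
    complexPullback (orbitMap S y) f ∈ LUCset S := by
  refine ⟨_, isLTranslates_complexPullback_orbitMap y f, (continuous_complexPullback _).comp ?_⟩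
  exact ContinuousMap.continuous_of_continuous_uncurry _ (f.continuous.comp continuous_smul)

theorem exists_regular_smulInvariantMeasure_of_hasLIM [T2Space Y] [MeasurableSpace Y]
    [BorelSpace Y] [Nonempty Y] (hLIM : HasLIM S (LUCset S)) :
    ∃ m : Measure Y, IsProbabilityMeasure m ∧ m.Regular ∧ SMulInvariantMeasure S Y m := by
  obtain ⟨μ, hμ, hμ_one, hμ_inv⟩ := hLIM
  obtain ⟨y₀⟩ := ‹Nonempty Y›
  obtain ⟨m, hm, hm_reg, integral_eq⟩ :=
    exists_regular_integral_eq_re_apply_complexPullback hμ.le hμ_one (orbitMap S y₀)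
  refine ⟨m, hm, hm_reg, ⟨fun s A hA => ?_⟩⟩
  have continuous_smul_s : Continuous fun y : Y => s • y := continuous_const_smul s
  have := Measure.InnerRegularCompactLTTop.map_of_continuous (μ := m) continuous_smul_s
  have map_smul_eq : m.map (s • ·) = m := by
    refine Measure.ext_of_integral_eq_on_compactlySupported fun f => ?_
    calc ∫ y, f y ∂m.map (s • ·) = ∫ y, f (s • y) ∂m :=
          integral_map continuous_smul_s.aemeasurable (map_continuous f).aestronglyMeasurable
      _ = _ := integral_eq (f.toContinuousMap.comp ⟨(s • ·), continuous_smul_s⟩)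
      _ = _ := congrArg Complex.re <| hμ_inv _ (complexPullback_orbitMap_mem_LUCset y₀ _) _
          (isLTranslates_complexPullback_orbitMap y₀ f.toContinuousMap) s
      _ = ∫ y, f y ∂m := (integral_eq f.toContinuousMap).symm
  rw [← Measure.map_apply continuous_smul_s.measurable hA, map_smul_eq]

end InvariantMeasure

theorem exists_regular_measurePreserving_restrict_of_hasLIM {S Y : Type*} [Semigroup S]
    [TopologicalSpace S] [TopologicalSpace Y] [T2Space Y] [MeasurableSpace Y] [BorelSpace Y]
    (hLIM : HasLIM S (LUCset S)) {K : Set Y} (hK : IsCompact K) (hK_ne : K.Nonempty)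
    {π : S → Y → Y} (hπ : ∀ s, MapsTo (π s) K K)
    (hπ_mul : ∀ s t, ∀ y ∈ K, π (s * t) y = π s (π t y))
    (hπ_cont : ContinuousOn (fun q : S × Y => π q.1 q.2) (univ ×ˢ K)) :
    ∃ m : Measure K, IsProbabilityMeasure m ∧ m.Regular ∧
      ∀ s, MeasurePreserving ((hπ s).restrict (π s) K K) m m := by
  have : CompactSpace K := isCompact_iff_compactSpace.1 hK
  have : Nonempty K := hK_ne.to_subtype
  let _ : SemigroupAction S K :=
    { smul := fun s => (hπ s).restrict (π s) K K
      mul_smul := fun s t y => Subtype.ext (hπ_mul s t y y.2) }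
  have : ContinuousSMul S K := by
    refine ⟨Continuous.subtype_mk ?_ _⟩
    exact hπ_cont.comp_continuous (f := fun q : S × K => (q.1, (q.2 : Y))) (by fun_prop)
      fun q => ⟨trivial, q.2.2⟩
  obtain ⟨m, hm, hm_reg, hm_inv⟩ :=
    exists_regular_smulInvariantMeasure_of_hasLIM (S := S) (Y := K) hLIM
  exact ⟨m, hm, hm_reg, fun s => measurePreserving_smul s m⟩

section MeanSqDist

variable {E : Type*} [AddCommGroup E] [Module ℝ E] [MeasurableSpace E] {K : Set E}
  {p : Seminorm ℝ E} {m : Measure K}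

/-- The mean squared `p`-distance from `x` to a random point of `K` with law `m`. It is squared so
that equality at a midpoint forces `p (x - ·)` and `p (z - ·)` to agree almost everywhere. -/
def meanSqDist (p : Seminorm ℝ E) (m : Measure K) (x : E) : ℝ :=
  ∫ y : K, p (x - y) ^ 2 ∂m

theorem meanSqDist_map_le {T : K → K} (hT : MeasurePreserving T m m)
    (hp : ∀ x, MemLp (fun y : K => p (x - y)) 2 m)
    (hT_nonexp : ∀ x y : K, p (T x - T y) ≤ p (x - y)) (x : K) :
    meanSqDist p m (T x) ≤ meanSqDist p m x := by
  have aestronglyMeasurable_map :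
      AEStronglyMeasurable (fun y : K => p (T x - y) ^ 2) (m.map T) := by
    simpa only [hT.map_eq] using (hp (T x)).integrable_sq.aestronglyMeasurable
  calc meanSqDist p m (T x) = ∫ y : K, p (T x - y) ^ 2 ∂(m.map T) := by
        rw [hT.map_eq, meanSqDist]
    _ = ∫ y : K, p (T x - T y) ^ 2 ∂m := integral_map hT.aemeasurable aestronglyMeasurable_map
    _ ≤ meanSqDist p m x := by
        refine integral_mono_of_nonneg (ae_of_all _ fun y => by positivity)
          (hp x).integrable_sq (ae_of_all _ fun y => ?_)
        exact pow_le_pow_left₀ (apply_nonneg p _) (hT_nonexp x y) 2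

theorem convexOn_meanSqDist (hp : ∀ x, MemLp (fun y : K => p (x - y)) 2 m) :
    ConvexOn ℝ univ (meanSqDist p m) := by
  refine ⟨convex_univ, fun x _ z _ a b ha hb hab => ?_⟩
  have convexOn_sq (y : K) : p (a • x + b • z - y) ^ 2 ≤ a * p (x - y) ^ 2 + b * p (z - y) ^ 2 :=
    calc p (a • x + b • z - y) ^ 2 = p (a • (x - y) + b • (z - y)) ^ 2 := by
          congr 2
          rw [smul_sub, smul_sub, sub_add_sub_comm, ← add_smul, hab, one_smul]
      _ ≤ (a * p (x - y) + b * p (z - y)) ^ 2 := by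
          gcongr
          exact p.convexOn.2 trivial trivial ha hb hab
      _ ≤ a * p (x - y) ^ 2 + b * p (z - y) ^ 2 :=
          (even_two.convexOn_pow (𝕜 := ℝ)).2 trivial trivial ha hb hab
  have integrable_x := (hp x).integrable_sq.const_mul a
  have integrable_z := (hp z).integrable_sq.const_mul b
  calc meanSqDist p m (a • x + b • z)
      ≤ ∫ y : K, (a * p (x - y) ^ 2 + b * p (z - y) ^ 2) ∂m :=
        integral_mono (hp _).integrable_sq (integrable_x.add integrable_z) convexOn_sq
    _ = a • meanSqDist p m x + b • meanSqDist p m z := by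
        rw [integral_add integrable_x integrable_z, integral_const_mul, integral_const_mul]
        rfl

theorem integral_sq_sub_le_meanSqDist_midpoint (hp : ∀ x, MemLp (fun y : K => p (x - y)) 2 m)
    (x z : E) :
    ∫ y : K, (p (x - y) - p (z - y)) ^ 2 ∂m ≤
      2 * meanSqDist p m x + 2 * meanSqDist p m z - 4 * meanSqDist p m (midpoint ℝ x z) := by
  have two_mul_midpoint_le (y : K) : 2 * p (midpoint ℝ x z - y) ≤ p (x - y) + p (z - y) :=
    calc 2 * p (midpoint ℝ x z - y) = p ((2 : ℝ) • (midpoint ℝ x z - y)) := by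
          rw [map_smul_eq_mul, Real.norm_two]
      _ = p ((x - y) + (z - y)) := by
          rw [smul_sub, two_smul, two_smul, midpoint_add_self, add_sub_add_comm]
      _ ≤ p (x - y) + p (z - y) := map_add_le_add p _ _
  have integrable_x := (hp x).integrable_sq.const_mul 2
  have integrable_z := (hp z).integrable_sq.const_mul 2
  have integrable_midpoint := (hp (midpoint ℝ x z)).integrable_sq.const_mul 4
  calc ∫ y : K, (p (x - y) - p (z - y)) ^ 2 ∂m
      ≤ ∫ y : K, (2 * p (x - y) ^ 2 + 2 * p (z - y) ^ 2 - 4 * p (midpoint ℝ x z - y) ^ 2) ∂m := by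
        refine integral_mono ((hp x).sub (hp z)).integrable_sq
          ((integrable_x.add integrable_z).sub integrable_midpoint) fun y => ?_
        have : (2 * p (midpoint ℝ x z - y)) ^ 2 ≤ (p (x - y) + p (z - y)) ^ 2 :=
          pow_le_pow_left₀ (by positivity) (two_mul_midpoint_le y) 2
        dsimp only
        linarith
    _ = _ := by
        have := integral_sub (integrable_x.add integrable_z) integrable_midpoint
        simp only [Pi.add_apply] at this
        rw [this, integral_add integrable_x integrable_z, integral_const_mul, integral_const_mul,
          integral_const_mul]
        rfl

theorem ae_eq_of_meanSqDist_le_midpoint (hp : ∀ x, MemLp (fun y : K => p (x - y)) 2 m) {x z : E}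
    (hx : meanSqDist p m x ≤ meanSqDist p m (midpoint ℝ x z))
    (hz : meanSqDist p m z ≤ meanSqDist p m (midpoint ℝ x z)) :
    ∀ᵐ y : K ∂m, p (x - y) = p (z - y) := by
  have integral_eq_zero : ∫ y : K, (p (x - y) - p (z - y)) ^ 2 ∂m = 0 :=
    le_antisymm (by linarith [integral_sq_sub_le_meanSqDist_midpoint hp x z])
      (integral_nonneg fun y => sq_nonneg _)
  filter_upwards [(integral_eq_zero_iff_of_nonneg (fun y => sq_nonneg _)
    ((hp x).sub (hp z)).integrable_sq).1 integral_eq_zero] with y hy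
  exact sub_eq_zero.1 (pow_eq_zero_iff two_ne_zero |>.1 hy)

theorem abs_meanSqDist_sub_le [IsProbabilityMeasure m]
    (hp : ∀ x, MemLp (fun y : K => p (x - y)) 2 m) {R : ℝ} (hR : ∀ y ∈ K, p y ≤ R) (x z : E) :
    |meanSqDist p m z - meanSqDist p m x| ≤ p (z - x) * (p z + p x + 2 * R) := by
  have abs_sq_sub_le (y : K) :
      |p (z - y) ^ 2 - p (x - y) ^ 2| ≤ p (z - x) * (p z + p x + 2 * R) :=
    calc |p (z - y) ^ 2 - p (x - y) ^ 2| = (p (z - y) + p (x - y)) * |p (z - y) - p (x - y)| := by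
          rw [sq_sub_sq, abs_mul, abs_of_nonneg (by positivity)]
      _ ≤ ((p z + R) + (p x + R)) * p (z - x) := by
          have abs_sub_le : |p (z - y) - p (x - y)| ≤ p (z - x) := by
            simpa using abs_sub_map_le_sub p (z - y : E) (x - y)
          have hyR : p y ≤ R := hR y y.2
          have := map_sub_le_add p z y
          have := map_sub_le_add p x y
          refine mul_le_mul (by linarith) abs_sub_le (abs_nonneg _) ?_
          linarith [apply_nonneg p z, apply_nonneg p x, apply_nonneg p (y : E)]
      _ = p (z - x) * (p z + p x + 2 * R) := by ring
  calc |meanSqDist p m z - meanSqDist p m x|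
      = |∫ y : K, (p (z - y) ^ 2 - p (x - y) ^ 2) ∂m| := by
        rw [integral_sub (hp z).integrable_sq (hp x).integrable_sq, meanSqDist, meanSqDist]
    _ ≤ p (z - x) * (p z + p x + 2 * R) := by
        simpa using! norm_integral_le_of_norm_le_const (μ := m)
          (f := fun y : K => p (z - y) ^ 2 - p (x - y) ^ 2) (ae_of_all _ abs_sq_sub_le)

theorem memLp_seminorm_sub [TopologicalSpace E] [IsTopologicalAddGroup E] [BorelSpace E]
    [IsFiniteMeasure m] (hp : LowerSemicontinuous p) (hp_bdd : BddAbove (p '' K)) (q : ENNReal)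
    (x : E) : MemLp (fun y : K => p (x - y)) q m := by
  obtain ⟨R, hR⟩ := hp_bdd
  have lowerSemicontinuous_sub : LowerSemicontinuous fun y : K => p (x - y) :=
    hp.comp (g := fun y : K => x - y) (by fun_prop)
  refine MemLp.of_bound lowerSemicontinuous_sub.measurable.aestronglyMeasurable (p x + R)
    (ae_of_all _ fun y => ?_)
  rw [Real.norm_of_nonneg (apply_nonneg p _)]
  exact (map_sub_le_add p x y).trans (by gcongr; exact hR (mem_image_of_mem p y.2))

end MeanSqDist

section MeanSqDistWeakSpace

variable {X : Type*} [AddCommGroup X] [Module ℝ X] [TopologicalSpace X] [IsTopologicalAddGroup X]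
  [MeasurableSpace (WeakSpace ℝ X)] {K : Set (WeakSpace ℝ X)} {p : Seminorm ℝ (WeakSpace ℝ X)}
  {m : Measure K} [IsProbabilityMeasure m]

theorem continuous_meanSqDist_comp_toWeakSpace (hp : Continuous (p ∘ toWeakSpace ℝ X))
    (hp_memLp : ∀ x, MemLp (fun y : K => p (x - y)) 2 m) (hp_bdd : BddAbove (p '' K)) :
    Continuous (meanSqDist p m ∘ toWeakSpace ℝ X) := by
  obtain ⟨R, hR⟩ := hp_bdd
  refine continuous_iff_continuousAt.2 fun x => tendsto_iff_dist_tendsto_zero.2 ?_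
  refine squeeze_zero (fun z => dist_nonneg) (fun z => abs_meanSqDist_sub_le hp_memLp
    (fun y hy => hR (mem_image_of_mem p hy)) (toWeakSpace ℝ X x) (toWeakSpace ℝ X z)) ?_
  have continuous_sub : Continuous fun z => p (toWeakSpace ℝ X z - toWeakSpace ℝ X x) := by
    simpa [Function.comp_def] using hp.comp (continuous_sub_right x)
  exact (continuous_sub.mul ((hp.add continuous_const).add continuous_const)).tendsto' _ _
    (by simp)

theorem lowerSemicontinuous_meanSqDist [ContinuousSMul ℝ X] [LocallyConvexSpace ℝ X]
    (hp : Continuous (p ∘ toWeakSpace ℝ X)) (hp_memLp : ∀ x, MemLp (fun y : K => p (x - y)) 2 m)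
    (hp_bdd : BddAbove (p '' K)) : LowerSemicontinuous (meanSqDist p m) :=
  lowerSemicontinuous_of_continuous_comp_toWeakSpace (convexOn_meanSqDist hp_memLp).quasiconvexOn
    (continuous_meanSqDist_comp_toWeakSpace hp hp_memLp hp_bdd)

end MeanSqDistWeakSpace

section Fragmentation

variable {X : Type*} [AddCommGroup X] [Module ℝ X] [TopologicalSpace X] [IsTopologicalAddGroup X]
  {p : Seminorm ℝ (WeakSpace ℝ X)} {c ε : ℝ}

section Measure

variable [MeasurableSpace (WeakSpace ℝ X)] {μ : Measure (WeakSpace ℝ X)}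

theorem measure_setOf_exists_mem_seminorm_sub_lt_eq_zero (hp : Continuous (p ∘ toWeakSpace ℝ X))
    (hε : ε < c) (hμ : ∀ x, μ {y | p (x - y) ≤ c} = 0) {C : Set X} (hC : IsCompact C) :
    μ {w | ∃ z ∈ C, p (toWeakSpace ℝ X z - w) < ε} = 0 := by
  refine hC.induction_on (p := fun C => μ {w | ∃ z ∈ C, p (toWeakSpace ℝ X z - w) < ε} = 0)
    (by simp) (fun s t hst ht => ?mono) (fun s t hs ht => ?union) fun x _ => ?nhds
  case mono =>
    refine measure_mono_null ?_ ht
    rintro w ⟨z, hz, hzw⟩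
    exact ⟨z, hst hz, hzw⟩
  case union =>
    refine measure_mono_null ?_ (measure_union_null hs ht)
    rintro w ⟨z, hz | hz, hzw⟩
    exacts [.inl ⟨z, hz, hzw⟩, .inr ⟨z, hz, hzw⟩]
  case nhds =>
    have isOpen_ball : IsOpen {z | p (toWeakSpace ℝ X (x - z)) < c - ε} :=
      isOpen_lt (hp.comp (continuous_sub_left x)) continuous_const
    refine ⟨_, mem_nhdsWithin_of_mem_nhds (isOpen_ball.mem_nhds (by simpa using hε)),
      measure_mono_null ?_ (hμ (toWeakSpace ℝ X x))⟩
    rintro w ⟨z, hxz, hzw⟩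
    calc p (toWeakSpace ℝ X x - w)
        = p (toWeakSpace ℝ X (x - z) + (toWeakSpace ℝ X z - w)) := by
          rw [map_sub (toWeakSpace ℝ X), sub_add_sub_cancel]
      _ ≤ p (toWeakSpace ℝ X (x - z)) + p (toWeakSpace ℝ X z - w) := map_add_le_add p _ _
      _ ≤ c := by linarith [show p (toWeakSpace ℝ X (x - z)) < c - ε from hxz]

variable [ContinuousSMul ℝ X]

theorem measure_setOf_exists_mem_convexHull_seminorm_sub_lt_eq_zero
    (hp : Continuous (p ∘ toWeakSpace ℝ X)) (hε : ε < c) (hμ : ∀ x, μ {y | p (x - y) ≤ c} = 0)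
    {A : Set (WeakSpace ℝ X)} (hA : A.Finite) :
    μ {w | ∃ z ∈ convexHull ℝ A, p (z - w) < ε} = 0 := by
  have hA' : ((toWeakSpace ℝ X).symm '' A).Finite := hA.image _
  have image_convexHull : toWeakSpace ℝ X '' convexHull ℝ ((toWeakSpace ℝ X).symm '' A) =
      convexHull ℝ A := by
    simpa [image_image] using
      (toWeakSpace ℝ X).toLinearMap.image_convexHull ((toWeakSpace ℝ X).symm '' A)
  simpa [← image_convexHull] using
    measure_setOf_exists_mem_seminorm_sub_lt_eq_zero hp hε hμ (hA'.isCompact_convexHull ℝ)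

variable [T2Space (WeakSpace ℝ X)] [BorelSpace (WeakSpace ℝ X)] [μ.InnerRegular]

theorem exists_isCompact_subset_separated_convexHull (hp : Continuous (p ∘ toWeakSpace ℝ X))
    (hε : ε < c) (hμ : ∀ x, μ {y | p (x - y) ≤ c} = 0) {A C : Set (WeakSpace ℝ X)}
    (hA : A.Finite) (hC : IsCompact C) (hμC : μ C ≠ 0) :
    ∃ C' ⊆ C, IsCompact C' ∧ μ C' ≠ 0 ∧ ∀ z ∈ convexHull ℝ A, ∀ w ∈ C', ε ≤ p (z - w) := by
  set B := {w | ∃ z ∈ convexHull ℝ A, p (z - w) < ε}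
  have measure_toMeasurable_B : μ (toMeasurable μ B) = 0 := by
    rw [measure_toMeasurable]
    exact measure_setOf_exists_mem_convexHull_seminorm_sub_lt_eq_zero hp hε hμ hA
  have measure_diff_pos : 0 < μ (C \ toMeasurable μ B) := by
    rwa [measure_sdiff_null measure_toMeasurable_B, pos_iff_ne_zero]
  obtain ⟨C', hC'_sub, hC', hμC'⟩ :=
    (hC.measurableSet.diff (measurableSet_toMeasurable μ B)).exists_lt_isCompact measure_diff_pos
  refine ⟨C', fun w hw => (hC'_sub hw).1, hC', hμC'.ne', fun z hz w hw => ?_⟩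
  by_contra! hlt
  exact (hC'_sub hw).2 (subset_toMeasurable μ B ⟨z, hz, hlt⟩)

theorem exists_seq_separated_convexHull (hp : Continuous (p ∘ toWeakSpace ℝ X)) (hε : ε < c)
    (hμ : ∀ x, μ {y | p (x - y) ≤ c} = 0) (hμ_ne : μ ≠ 0) :
    ∃ A C : ℕ → Set (WeakSpace ℝ X), Monotone A ∧ Antitone C ∧ (∀ n, IsCompact (C n)) ∧
      (∀ n, (A (n + 1) ∩ C n).Nonempty) ∧
      ∀ n, ∀ z ∈ convexHull ℝ (A n), ∀ w ∈ C (n + 1), ε ≤ p (z - w) := by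
  let State := {q : Set (WeakSpace ℝ X) × Set (WeakSpace ℝ X) //
    q.1.Finite ∧ IsCompact q.2 ∧ μ q.2 ≠ 0}
  have exists_next (q : State) : ∃ q' : State, q.1.1 ⊆ q'.1.1 ∧ q'.1.2 ⊆ q.1.2 ∧
      (q'.1.1 ∩ q.1.2).Nonempty ∧ ∀ z ∈ convexHull ℝ q.1.1, ∀ w ∈ q'.1.2, ε ≤ p (z - w) := by
    obtain ⟨⟨A, C⟩, hA, hC, hμC⟩ := q
    obtain ⟨C', hC'_sub, hC', hμC', separated⟩ :=
      exists_isCompact_subset_separated_convexHull hp hε hμ hA hC hμC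
    obtain ⟨y, hy⟩ := nonempty_of_measure_ne_zero hμC
    exact ⟨⟨(insert y A, C'), hA.insert y, hC', hμC'⟩, subset_insert y A, hC'_sub,
      ⟨y, mem_insert y A, hy⟩, separated⟩
  choose next hA_sub hC_sub hne separated using exists_next
  obtain ⟨C₀, hC₀, hμC₀⟩ := Measure.InnerRegular.exists_isCompact_not_null.2 hμ_ne
  let state (n : ℕ) : State := next^[n] ⟨(∅, C₀), finite_empty, hC₀, hμC₀⟩
  have state_succ (n : ℕ) : state (n + 1) = next (state n) := Function.iterate_succ_apply' ..
  refine ⟨fun n => (state n).1.1, fun n => (state n).1.2, monotone_nat_of_le_succ fun n => ?_,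
    antitone_nat_of_succ_le fun n => ?_, fun n => (state n).2.2.1, fun n => ?_, fun n => ?_⟩
  all_goals simp only [state_succ]
  exacts [hA_sub _, hC_sub _, hne _, separated _]

end Measure

variable [ContinuousSMul ℝ X] [LocallyConvexSpace ℝ X] [T2Space (WeakSpace ℝ X)]

theorem exists_mem_convexHull_seminorm_sub_lt (hp : Continuous (p ∘ toWeakSpace ℝ X)) (hε : 0 < ε)
    {A C : ℕ → Set (WeakSpace ℝ X)} (hA : Monotone A) (hC : Antitone C)
    (hC_compact : ∀ n, IsCompact (C n)) (hAC : ∀ n, (A (n + 1) ∩ C n).Nonempty) :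
    ∃ n, ∃ z ∈ convexHull ℝ (A n), ∃ w ∈ C (n + 1), p (z - w) < ε := by
  set D := ⋃ n, convexHull ℝ (A n)
  have convex_D : Convex ℝ D :=
    ((convexHull ℝ).monotone.comp hA).directed_le.convex_iUnion fun n => convex_convexHull ℝ _
  obtain ⟨w, hw⟩ : (⋂ n, closure D ∩ C n).Nonempty := by
    refine IsCompact.nonempty_iInter_of_sequence_nonempty_isCompact_isClosed _
      (fun n => inter_subset_inter_right _ (hC n.le_succ)) (fun n => ?_)
      ((hC_compact 0).inter_left isClosed_closure)
      (fun n => isClosed_closure.inter (hC_compact n).isClosed)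
    obtain ⟨y, hyA, hyC⟩ := hAC n
    exact ⟨y, subset_closure (mem_iUnion.2 ⟨n + 1, subset_convexHull ℝ _ hyA⟩), hyC⟩
  rw [mem_iInter] at hw
  obtain ⟨z, hzD, hzw⟩ :=
    exists_mem_seminorm_sub_lt_of_mem_closure_weakSpace hp convex_D (hw 0).1 hε
  obtain ⟨n, hz⟩ := mem_iUnion.1 hzD
  exact ⟨n, z, hz, w, (hw (n + 1)).2, hzw⟩

theorem exists_measure_setOf_seminorm_sub_le_ne_zero [MeasurableSpace (WeakSpace ℝ X)]
    [BorelSpace (WeakSpace ℝ X)] {μ : Measure (WeakSpace ℝ X)} [μ.InnerRegular]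
    (hp : Continuous (p ∘ toWeakSpace ℝ X)) (hμ : μ ≠ 0) (hc : 0 < c) :
    ∃ x, μ {y | p (x - y) ≤ c} ≠ 0 := by
  by_contra! null_balls
  obtain ⟨A, C, hA, hC, hC_compact, hAC, separated⟩ :=
    exists_seq_separated_convexHull hp (half_lt_self hc) null_balls hμ
  obtain ⟨n, z, hz, w, hw, hzw⟩ :=
    exists_mem_convexHull_seminorm_sub_lt hp (half_pos hc) hA hC hC_compact hAC
  exact (separated n z hz w hw).not_gt hzw

end Fragmentation

section Minimal

variable {S E : Type*} [AddCommGroup E] [Module ℝ E] [TopologicalSpace E] {π : S → E → E}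
  {K : Set E}

/-- Nonempty compact convex sets invariant under a family of self-maps. The fixed point is the
unique element of a minimal such set. -/
structure IsInvariantCompactConvex (π : S → E → E) (K : Set E) : Prop where
  nonempty : K.Nonempty
  isCompact : IsCompact K
  convex : Convex ℝ K
  mapsTo : ∀ s, MapsTo (π s) K K

namespace IsInvariantCompactConvex

theorem sInter_of_isChain [T2Space E] {𝒞 : Set (Set E)} (h𝒞 : IsChain (· ⊆ ·) 𝒞)
    (h𝒞_ne : 𝒞.Nonempty) (hinv : ∀ C ∈ 𝒞, IsInvariantCompactConvex π C) :
    IsInvariantCompactConvex π (⋂₀ 𝒞) where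
  nonempty := by
    have : Nonempty 𝒞 := h𝒞_ne.to_subtype
    have directedOn_𝒞 : DirectedOn (· ⊇ ·) 𝒞 := IsChain.directedOn h𝒞.symm
    exact IsCompact.nonempty_sInter_of_directed_nonempty_isCompact_isClosed directedOn_𝒞
      (fun C hC => (hinv C hC).nonempty) (fun C hC => (hinv C hC).isCompact)
      fun C hC => (hinv C hC).isCompact.isClosed
  isCompact := by
    obtain ⟨C₀, hC₀⟩ := h𝒞_ne
    exact (hinv C₀ hC₀).isCompact.of_isClosed_subset
      (isClosed_sInter fun C hC => (hinv C hC).isCompact.isClosed) (sInter_subset_of_mem hC₀)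
  convex := convex_sInter fun C hC => (hinv C hC).convex
  mapsTo s x hx C hC := (hinv C hC).mapsTo s (hx C hC)

theorem exists_minimal_subset [T2Space E] (hK : IsInvariantCompactConvex π K) :
    ∃ C ⊆ K, Minimal (IsInvariantCompactConvex π) C :=
  zorn_superset_nonempty {C | IsInvariantCompactConvex π C}
    (fun 𝒞 h𝒞_sub h𝒞 h𝒞_ne => ⟨⋂₀ 𝒞, sInter_of_isChain h𝒞 h𝒞_ne h𝒞_sub,
      fun _ hC => sInter_subset_of_mem hC⟩) K hK

theorem apply_le_of_minimal (hK : Minimal (IsInvariantCompactConvex π) K) {Φ : E → ℝ}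
    (hΦ : LowerSemicontinuous Φ) (hΦ_conv : QuasiconvexOn ℝ univ Φ)
    (hΦ_map : ∀ s, ∀ x ∈ K, Φ (π s x) ≤ Φ x) {x y : E} (hx : x ∈ K) (hy : y ∈ K) : Φ x ≤ Φ y := by
  have sublevel : IsInvariantCompactConvex π (K ∩ {z | Φ z ≤ Φ y}) :=
    { nonempty := ⟨y, hy, le_refl (Φ y)⟩
      isCompact := hK.prop.isCompact.inter_right (hΦ.isClosed_preimage (Φ y))
      convex := hK.prop.convex.inter (by simpa using hΦ_conv (Φ y))
      mapsTo := fun s z hz => ⟨hK.prop.mapsTo s hz.1, (hΦ_map s z hz.1).trans hz.2⟩ }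
  exact (hK.le_of_le sublevel inter_subset_left hx).2

end IsInvariantCompactConvex

end Minimal

section FixedPoint

variable {X : Type*} [AddCommGroup X] [Module ℝ X] [TopologicalSpace X] [IsTopologicalAddGroup X]
  [ContinuousSMul ℝ X] [LocallyConvexSpace ℝ X] [T2Space (WeakSpace ℝ X)]
  {K : Set (WeakSpace ℝ X)} {p : Seminorm ℝ (WeakSpace ℝ X)}

section Measure

variable [MeasurableSpace (WeakSpace ℝ X)] [BorelSpace (WeakSpace ℝ X)] {m : Measure K}

theorem exists_measure_inter_setOf_seminorm_sub_le_ne_zero [IsFiniteMeasure m]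
    [m.InnerRegularCompactLTTop] (hp : Continuous (p ∘ toWeakSpace ℝ X)) {U : Set K}
    (hU : MeasurableSet U) (hmU : m U ≠ 0) {c : ℝ} (hc : 0 < c) :
    ∃ x : K, m (U ∩ {y : K | p (x - y) ≤ c}) ≠ 0 := by
  have := Measure.InnerRegular.map_of_continuous (μ := m.restrict U) continuous_subtype_val
  have map_ne_zero : (m.restrict U).map Subtype.val ≠ 0 := by
    rwa [Ne, Measure.map_eq_zero_iff measurable_subtype_coe.aemeasurable,
      Measure.restrict_eq_zero]
  obtain ⟨z, hz⟩ := exists_measure_setOf_seminorm_sub_le_ne_zero hp map_ne_zero (half_pos hc)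
  have isClosed_ball : IsClosed {y | p (z - y) ≤ c / 2} :=
    ((lowerSemicontinuous_seminorm_of_continuous_comp_toWeakSpace hp).isClosed_preimage
      (c / 2)).preimage (continuous_sub_left z)
  rw [Measure.map_apply measurable_subtype_coe isClosed_ball.measurableSet,
    Measure.restrict_apply' hU, inter_comm] at hz
  obtain ⟨x, _, hxz⟩ := nonempty_of_measure_ne_zero hz
  refine ⟨x, fun hnull => hz (measure_mono_null (inter_subset_inter_right U ?_) hnull)⟩
  intro y hyz
  calc p (x - y) = p ((z - y) - (z - x)) := by rw [sub_sub_sub_cancel_left]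
    _ ≤ p (z - y) + p (z - x) := map_sub_le_add p _ _
    _ ≤ c := by linarith [show p (z - y) ≤ c / 2 from hyz, show p (z - x) ≤ c / 2 from hxz]

theorem ae_seminorm_sub_eq_zero_of_forall_ae_eq [IsFiniteMeasure m] [m.InnerRegularCompactLTTop]
    (hp : Continuous (p ∘ toWeakSpace ℝ X))
    (hae : ∀ x z : K, ∀ᵐ y : K ∂m, p (x - y) = p (z - y)) (x : K) :
    ∀ᵐ y : K ∂m, p (x - y) = 0 := by
  have ae_le {c : ℝ} (hc : 0 < c) : ∀ᵐ y : K ∂m, p (x - y) ≤ c := by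
    have isOpen_compl_ball : IsOpen {y : K | c < p (x - y)} :=
      ((lowerSemicontinuous_seminorm_of_continuous_comp_toWeakSpace hp).isOpen_preimage c).preimage
        (f := fun y : K => (x : WeakSpace ℝ X) - y) (by fun_prop)
    by_contra hnot
    obtain ⟨z, hz⟩ := exists_measure_inter_setOf_seminorm_sub_le_ne_zero hp
      isOpen_compl_ball.measurableSet (by simpa [ae_iff] using hnot) hc
    refine hz (measure_mono_null ?_ (hae x z))
    rintro y ⟨hxy, hzy⟩ heq
    exact hxy.not_ge (heq.trans_le hzy)
  filter_upwards [ae_all_iff.2 fun n : ℕ => ae_le (Nat.one_div_pos_of_nat (n := n))] with y hy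
  exact le_antisymm (ge_of_tendsto' tendsto_one_div_add_atTop_nhds_zero_nat hy) (apply_nonneg p _)

theorem seminorm_sub_eq_zero_of_minimal_s2 {S : Type*} {π : S → WeakSpace ℝ X → WeakSpace ℝ X}
    (hK : Minimal (IsInvariantCompactConvex π) K) [IsProbabilityMeasure m]
    [m.InnerRegularCompactLTTop]
    (hm : ∀ s, MeasurePreserving ((hK.prop.mapsTo s).restrict (π s) K K) m m)
    (hp : Continuous (p ∘ toWeakSpace ℝ X))
    (hp_nonexp : ∀ s, ∀ x ∈ K, ∀ y ∈ K, p (π s x - π s y) ≤ p (x - y))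
    {x z : WeakSpace ℝ X} (hx : x ∈ K) (hz : z ∈ K) : p (x - z) = 0 := by
  have hp_lsc := lowerSemicontinuous_seminorm_of_continuous_comp_toWeakSpace hp
  have hp_bdd : BddAbove (p '' K) :=
    bddAbove_seminorm_image_of_isCompact hK.prop.isCompact hK.prop.convex hp_lsc
  have hp_memLp (x) : MemLp (fun y : K => p (x - y)) 2 m := memLp_seminorm_sub hp_lsc hp_bdd 2 x
  have meanSqDist_le {x z} (hx : x ∈ K) (hz : z ∈ K) : meanSqDist p m x ≤ meanSqDist p m z :=
    IsInvariantCompactConvex.apply_le_of_minimal hK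
      (lowerSemicontinuous_meanSqDist hp hp_memLp hp_bdd)
      (convexOn_meanSqDist hp_memLp).quasiconvexOn
      (fun s x hx => meanSqDist_map_le (hm s) hp_memLp
        (fun x y => hp_nonexp s x x.2 y y.2) ⟨x, hx⟩) hx hz
  have ae_eq (x z : K) : ∀ᵐ y : K ∂m, p (x - y) = p (z - y) := by
    have midpoint_mem : midpoint ℝ (x : WeakSpace ℝ X) z ∈ K :=
      hK.prop.convex.midpoint_mem x.2 z.2
    exact ae_eq_of_meanSqDist_le_midpoint hp_memLp (meanSqDist_le x.2 midpoint_mem)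
      (meanSqDist_le z.2 midpoint_mem)
  obtain ⟨y, hxy, hzy⟩ := ((ae_seminorm_sub_eq_zero_of_forall_ae_eq hp ae_eq ⟨x, hx⟩).and
    (ae_seminorm_sub_eq_zero_of_forall_ae_eq hp ae_eq ⟨z, hz⟩)).exists
  refine le_antisymm ?_ (apply_nonneg p _)
  calc p (x - z) = p ((x - y) - (z - y)) := by rw [sub_sub_sub_cancel_right]
    _ ≤ p (x - y) + p (z - y) := map_sub_le_add p _ _
    _ = 0 := by rw [hxy, hzy, add_zero]

end Measure

theorem exists_fixedPoint_of_hasLIM {S : Type*} [Semigroup S] [TopologicalSpace S]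
    (hLIM : HasLIM S (LUCset S)) {π : S → WeakSpace ℝ X → WeakSpace ℝ X}
    (hK : IsInvariantCompactConvex π K) (hπ_mul : ∀ s t, ∀ x ∈ K, π (s * t) x = π s (π t x))
    (hπ_cont : ContinuousOn (fun q : S × WeakSpace ℝ X => π q.1 q.2) (univ ×ˢ K))
    {ι : Type*} {P : ι → Seminorm ℝ (WeakSpace ℝ X)}
    (hP : ∀ i, Continuous (P i ∘ toWeakSpace ℝ X)) (hP_sep : ∀ x, (∀ i, P i x = 0) → x = 0)
    (hP_nonexp : ∀ i s, ∀ x ∈ K, ∀ y ∈ K, P i (π s x - π s y) ≤ P i (x - y)) :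
    ∃ x ∈ K, ∀ s, π s x = x := by
  obtain ⟨C, hCK, hC⟩ := hK.exists_minimal_subset
  obtain ⟨x, hx⟩ := hC.prop.nonempty
  borelize (WeakSpace ℝ X)
  obtain ⟨m, _, _, hm⟩ := exists_regular_measurePreserving_restrict_of_hasLIM hLIM
    hC.prop.isCompact hC.prop.nonempty hC.prop.mapsTo (fun s t y hy => hπ_mul s t y (hCK hy))
    (hπ_cont.mono (prod_mono_right hCK))
  refine ⟨x, hCK hx, fun s => sub_eq_zero.1 (hP_sep _ fun i => ?_)⟩
  exact seminorm_sub_eq_zero_of_minimal_s2 hC hm (hP i)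
    (fun s x hx y hy => hP_nonexp i s x (hCK hx) y (hCK hy)) (hC.prop.mapsTo s hx) hx

end FixedPoint

theorem propertyGStar_of_LUC_hasLIM_general {S : Type u} [Semigroup S] [TopologicalSpace S]
    (hLIM : HasLIM S (LUCset S)) : PropertyGStar.{u, v} S := by
  intro X _ _ _ _ ι _ Q hQ K π hK_ne hK_conv hK hπ_maps hπ_mul hπ_cont hQ_nonexp
  rw [weakTop_eq_instTopologicalSpace_weakSpace] at hK hπ_cont
  have := hQ.topologicalAddGroup
  have := hQ.continuousSMul
  have := hQ.toLocallyConvexSpace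
  have hQ_sep := hQ.separating_of_T1
  have hK_inv : IsInvariantCompactConvex (E := WeakSpace ℝ X) π K := ⟨hK_ne, hK, hK_conv, hπ_maps⟩
  exact exists_fixedPoint_of_hasLIM hLIM hK_inv hπ_mul hπ_cont
    (P := fun i => (Q i).comp (toWeakSpace ℝ X).symm.toLinearMap) hQ.continuous_seminorm
    (fun x hx => by_contra fun hx_ne => (hQ_sep x hx_ne).elim fun i hi => hi (hx i)) hQ_nonexp

/-- **Theorem (LUC)**: if `LUC(S)` has a left invariant mean, then `S` has property (G*). -/
theorem propertyGStar_of_LUC_hasLIM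
    {S : Type u} [Semigroup S] [TopologicalSpace S] [T2Space S]
    (hS : IsSemitopologicalSemigroup S)
    (hLIM : HasLIM S (LUCset S)) :
    PropertyGStar.{u, v} S :=
  propertyGStar_of_LUC_hasLIM_general hLIM
end
end
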